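/- arXiv:1407.4371 — 5 statements merged into one kernel-verified Lean document; each statement's English description precedes it below -/
import Mathlib

section
/- Let M be a finitely generated torsion Λ-module. Then there exist nonnegative integers r, μ, λ, an integer ν, and N ∈ ℕ such that for all n ≥ N: the ℤ_p-rank of M/ω_nM equals r, and the torsion subgroup (M/ω_nM)[p^∞] is finite of order p^{μ·p^n + λ·n + ν}. -/
open PowerSeries
open scoped Pointwise
noncomputable def omegaN (p : ℕ) [Fact p.Prime] (n : ℕ) : PowerSeries ℤ_[p] :=
  (1 + PowerSeries.X) ^ (p ^ n) - 1

lemma fin_card (p : ℕ) [Fact p.Prime] (X : Type*) [AddCommGroup X] [Module ℤ_[p] X]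
    [Module.Finite ℤ_[p] X] (k : ℕ) (h : ∀ x : X, (p : ℤ_[p]) ^ k • x = 0) :
    Finite X ∧ ∃ j, Nat.card X = p ^ j := by
  have hT : Module.IsTorsionBySet ℤ_[p] X (Ideal.span {(p : ℤ_[p]) ^ k} : Ideal ℤ_[p]) := by
    rw [Module.isTorsionBySet_span_singleton_iff]
    intro x; exact h x
  let _ := hT.module
  have : IsScalarTower ℤ_[p] (ℤ_[p] ⧸ (Ideal.span {(p : ℤ_[p]) ^ k} : Ideal ℤ_[p])) X := hT.isScalarTower
  have : Module.Finite (ℤ_[p] ⧸ (Ideal.span {(p : ℤ_[p]) ^ k} : Ideal ℤ_[p])) X :=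
    Module.Finite.of_restrictScalars_finite ℤ_[p] _ _
  have : NeZero (p ^ k) := ⟨pow_ne_zero _ (Fact.out : p.Prime).ne_zero⟩
  have : Finite (ℤ_[p] ⧸ (Ideal.span {(p : ℤ_[p]) ^ k} : Ideal ℤ_[p])) := by
    rw [← PadicInt.ker_toZModPow]
    exact Finite.of_injective _ (RingHom.kerLift_injective (PadicInt.toZModPow (p := p) k))
  have hf : Finite X := Module.finite_of_finite (ℤ_[p] ⧸ (Ideal.span {(p : ℤ_[p]) ^ k} : Ideal ℤ_[p]))
  refine ⟨hf, ?_⟩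
  have : IsPGroup p (Multiplicative X) := by
    intro g
    refine ⟨k, ?_⟩
    have := h g.toAdd
    apply Multiplicative.toAdd.injective
    rw [toAdd_pow, toAdd_one, ← this, ← Nat.cast_pow, Nat.cast_smul_eq_nsmul]
  obtain ⟨j, hj⟩ := IsPGroup.iff_card.1 this
  exact ⟨j, hj⟩

lemma surj_lemma (p : ℕ) [Fact p.Prime] {X Y : Type*} [AddCommGroup X] [Module ℤ_[p] X]
    [AddCommGroup Y] [Module ℤ_[p] Y] (f : X →ₗ[ℤ_[p]] Y) (hf : Function.Surjective f)
    (hk : Finite (LinearMap.ker f)) (hY : Finite (Submodule.torsion ℤ_[p] Y)) :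
    Module.finrank ℤ_[p] X = Module.finrank ℤ_[p] Y ∧
    Finite (Submodule.torsion ℤ_[p] X) ∧ Nat.card (Submodule.torsion ℤ_[p] X) =
      Nat.card (LinearMap.ker f) * Nat.card (Submodule.torsion ℤ_[p] Y) := by
  have hkt : ∀ x, f x = 0 → ∃ a : ℕ, a ≠ 0 ∧ (a : ℤ_[p]) • x = 0 := by
    intro x hx
    refine ⟨Nat.card (LinearMap.ker f), Nat.card_pos.ne', ?_⟩
    have := card_nsmul_eq_zero' (x := (⟨x, hx⟩ : LinearMap.ker f))
    rw [Nat.cast_smul_eq_nsmul]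
    simpa using congrArg Subtype.val this
  refine ⟨?_, ?_⟩
  · have h1 := rank_quotient_add_rank_of_isDomain (LinearMap.ker f)
    have h2 : Module.rank ℤ_[p] (LinearMap.ker f) = 0 := by
      rw [Module.rank_eq_zero_iff_isTorsion]
      rintro ⟨x, hx⟩
      obtain ⟨a, ha, h⟩ := hkt x hx
      refine ⟨⟨a, mem_nonZeroDivisors_of_ne_zero (by exact_mod_cast ha)⟩, Subtype.ext h⟩
    rw [h2, add_zero] at h1
    rw [Module.finrank, ← h1]
    exact (LinearMap.quotKerEquivOfSurjective f hf).finrank_eq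
  · have hmem : ∀ x, x ∈ Submodule.torsion ℤ_[p] X ↔ f x ∈ Submodule.torsion ℤ_[p] Y := by
      intro x
      constructor
      · rintro ⟨a, ha⟩
        exact ⟨a, by
          have ha' : (a : ℤ_[p]) • x = 0 := ha
          have := map_smul f (a : ℤ_[p]) x
          rw [ha', map_zero] at this
          exact this.symm⟩
      · rintro ⟨a, ha⟩
        have ha' : f ((a : ℤ_[p]) • x) = 0 := by rw [map_smul]; exact ha
        obtain ⟨b, hb, hb'⟩ := hkt _ ha'
        refine ⟨⟨b, mem_nonZeroDivisors_of_ne_zero (by exact_mod_cast hb)⟩ * a, ?_⟩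
        rw [mul_smul]; exact hb'
    let g : Submodule.torsion ℤ_[p] X →ₗ[ℤ_[p]] Submodule.torsion ℤ_[p] Y :=
      f.restrict fun x hx => (hmem x).1 hx
    have hg : Function.Surjective g := by
      rintro ⟨y, hy⟩
      obtain ⟨x, rfl⟩ := hf y
      exact ⟨⟨x, (hmem x).2 hy⟩, rfl⟩
    have hle : ∀ x, f x = 0 → x ∈ Submodule.torsion ℤ_[p] X := fun x hx =>
      (hmem x).2 (by rw [hx]; exact zero_mem _)
    let e : LinearMap.ker g ≃ LinearMap.ker f :=
      { toFun := fun x => ⟨x.1.1, congrArg Subtype.val (x.2 : g x.1 = 0)⟩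
        invFun := fun x => ⟨⟨x.1, hle x.1 x.2⟩, Subtype.ext x.2⟩
        left_inv := fun _ => rfl
        right_inv := fun _ => rfl }
    have hc := AddSubgroup.card_eq_card_quotient_mul_card_addSubgroup g.ker.toAddSubgroup
    have e2 : (Submodule.torsion ℤ_[p] X ⧸ g.ker.toAddSubgroup) ≃ Submodule.torsion ℤ_[p] Y :=
      (LinearMap.quotKerEquivOfSurjective g hg).toEquiv
    have hc' : Nat.card (Submodule.torsion ℤ_[p] X) =
      Nat.card (LinearMap.ker f) * Nat.card (Submodule.torsion ℤ_[p] Y) := by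
      rw [hc, Nat.card_congr e2, mul_comm]
      congr 1
      exact Nat.card_congr e
    refine ⟨?_, hc'⟩
    apply Nat.finite_of_card_ne_zero
    rw [hc']
    exact mul_ne_zero Nat.card_pos.ne' Nat.card_pos.ne'

/-- relative index -/
noncomputable def ri {R M : Type*} [Ring R] [AddCommGroup M] [Module R M] (Y X : Submodule R M) : ℕ :=
  Y.toAddSubgroup.relIndex X.toAddSubgroup

lemma ri_mul {R M : Type*} [Ring R] [AddCommGroup M] [Module R M] {Z Y X : Submodule R M}
   (h1 : Z ≤ Y) (h2 : Y ≤ X) : ri Z Y * ri Y X = ri Z X :=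
  AddSubgroup.relIndex_mul_relIndex _ _ _ h1 h2

lemma ri_card {R M : Type*} [Ring R] [AddCommGroup M] [Module R M] (Y X : Submodule R M) :
    ri Y X = Nat.card (X.map Y.mkQ) := by
  unfold ri
  have := AddSubgroup.relIndex_ker (f := (Y.mkQ.toAddMonoidHom)) X.toAddSubgroup
  have hk : Y.mkQ.toAddMonoidHom.ker = Y.toAddSubgroup := by
    ext x; simp [AddMonoidHom.mem_ker]
  rw [hk] at this
  rw [this]
  rfl

lemma ri_smul {R M : Type*} [CommRing R] [AddCommGroup M] [Module R M] (a : R) (Y X : Submodule R M)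
    (h : ∀ x : M, a • x = 0 → x = 0) : ri (a • Y) (a • X) = ri Y X := by
  have := AddSubgroup.relIndex_map_map_of_injective (f := DistribSMul.toAddMonoidHom M a)
    Y.toAddSubgroup X.toAddSubgroup ((injective_iff_map_eq_zero _).2 h)
  exact this

lemma ri_smul_dvd {R M : Type*} [CommRing R] [AddCommGroup M] [Module R M] (a : R)
    (Y X : Submodule R M) (hYX : Y ≤ X) : ri (a • Y) (a • X) ∣ ri Y X := by
  have := AddSubgroup.relIndex_map_map (DistribSMul.toAddMonoidHom M a)
    Y.toAddSubgroup X.toAddSubgroup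
  have h2 : ri (a • Y) (a • X) = _ := this
  rw [h2]
  have hYX' : Y.toAddSubgroup ≤ X.toAddSubgroup := hYX
  set K := (DistribSMul.toAddMonoidHom M a).ker
  have h3 : X.toAddSubgroup ⊔ K = X.toAddSubgroup ⊔ (Y.toAddSubgroup ⊔ K) := by
    rw [← sup_assoc, sup_eq_left.2 hYX']
  rw [h3, AddSubgroup.relIndex_sup_right]
  exact AddSubgroup.relIndex_dvd_of_le_left _ le_sup_left

lemma rel_pow (p : ℕ) [Fact p.Prime] {M : Type*} [AddCommGroup M] [Module (PowerSeries ℤ_[p]) M]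
    [Module ℤ_[p] M] [IsScalarTower ℤ_[p] (PowerSeries ℤ_[p]) M]
    (X Y : Submodule (PowerSeries ℤ_[p]) M) (hX : X.FG)
    (hp : ∀ x ∈ X, (p : PowerSeries ℤ_[p]) • x ∈ Y)
    (hT : ∀ x ∈ X, (PowerSeries.X : PowerSeries ℤ_[p]) • x ∈ Y) : ∃ j, ri Y X = p ^ j := by
  have : Module.Finite (PowerSeries ℤ_[p]) X := Module.Finite.iff_fg.2 hX
  have hs : ∀ (f : PowerSeries ℤ_[p]) (w : X ⧸ Y.submoduleOf X),
      f • w = (PowerSeries.constantCoeff f) • w := by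
    intro f w
    obtain ⟨x, rfl⟩ := Submodule.Quotient.mk_surjective _ w
    obtain ⟨g, hg⟩ : PowerSeries.X ∣ f - PowerSeries.C (PowerSeries.constantCoeff f) := by
      rw [PowerSeries.X_dvd_iff]; simp
    have h1 : f = PowerSeries.C (PowerSeries.constantCoeff f) + g * PowerSeries.X := by
      rw [mul_comm, ← hg]; ring
    have h2 : (PowerSeries.X : PowerSeries ℤ_[p]) • (Submodule.Quotient.mk x : X ⧸ Y.submoduleOf X) = 0 := by
      rw [← Submodule.Quotient.mk_smul, Submodule.Quotient.mk_eq_zero]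
      exact hT x.1 x.2
    conv_lhs => rw [h1]
    rw [add_smul, mul_smul, h2, smul_zero, add_zero]
    exact algebraMap_smul (PowerSeries ℤ_[p]) (PowerSeries.constantCoeff f) _
  have hfin : Module.Finite ℤ_[p] (X ⧸ Y.submoduleOf X) := by
    obtain ⟨s, hs'⟩ := (inferInstance : Module.Finite (PowerSeries ℤ_[p]) (X ⧸ Y.submoduleOf X)).fg_top
    refine ⟨s, ?_⟩
    rw [eq_top_iff]
    intro w _
    have hw : w ∈ Submodule.span (PowerSeries ℤ_[p]) (s : Set (X ⧸ Y.submoduleOf X)) := by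
      rw [hs']; trivial
    induction hw using Submodule.span_induction with
    | mem x hx => exact Submodule.subset_span hx
    | zero => exact zero_mem _
    | add x y _ _ hx hy => exact add_mem (hx trivial) (hy trivial)
    | smul a x _ hx => rw [hs]; exact Submodule.smul_mem _ _ (hx trivial)
  obtain ⟨-, j, hj⟩ := fin_card p (X ⧸ Y.submoduleOf X) 1 (by
    intro w
    obtain ⟨x, rfl⟩ := Submodule.Quotient.mk_surjective _ w
    rw [pow_one, Nat.cast_smul_eq_nsmul, ← Nat.cast_smul_eq_nsmul (PowerSeries ℤ_[p]),
      ← Submodule.Quotient.mk_smul, Submodule.Quotient.mk_eq_zero]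
    exact hp x.1 x.2)
  exact ⟨j, hj⟩

lemma ri_chain (p : ℕ) [Fact p.Prime] {M : Type*} [AddCommGroup M] [Module (PowerSeries ℤ_[p]) M]
    [Module ℤ_[p] M] [IsScalarTower ℤ_[p] (PowerSeries ℤ_[p]) M]
    [Module.Finite (PowerSeries ℤ_[p]) M]
    (X : Submodule (PowerSeries ℤ_[p]) M)
    (hp : ∀ x ∈ X, (p : PowerSeries ℤ_[p]) • x = 0) :
    (∀ e, ∃ j, ri ((PowerSeries.X : PowerSeries ℤ_[p]) ^ e • X) X = p ^ j) ∧
    ∃ μ c i₀ : ℕ, ∀ e, ri ((PowerSeries.X : PowerSeries ℤ_[p]) ^ (i₀ + e) • X) X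
      = p ^ (μ * e + c) := by
  have hle : ∀ e, (PowerSeries.X : PowerSeries ℤ_[p]) ^ e • X ≤ X := by
    intro e x hx
    rw [Submodule.mem_smul_pointwise_iff_exists] at hx
    obtain ⟨y, hy, rfl⟩ := hx
    exact X.smul_mem _ hy
  have hle1 : ∀ e, (PowerSeries.X : PowerSeries ℤ_[p]) ^ (e + 1) • X ≤
      (PowerSeries.X : PowerSeries ℤ_[p]) ^ e • X := by
    intro e
    rw [pow_succ, mul_smul]
    rw [← pow_one (PowerSeries.X : PowerSeries ℤ_[p]), ← pow_mul, one_mul]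
    exact smul_mono_right _ (hle 1)
  have hj : ∀ e, ∃ j, ri ((PowerSeries.X : PowerSeries ℤ_[p]) ^ (e + 1) • X)
      ((PowerSeries.X : PowerSeries ℤ_[p]) ^ e • X) = p ^ j := by
    intro e
    apply rel_pow
    · exact IsNoetherian.noetherian _
    · intro x hx
      rw [hp x (hle e hx)]
      exact zero_mem _
    · intro x hx
      rw [pow_succ', mul_smul]
      exact Submodule.smul_mem_pointwise_smul _ _ _ hx
  choose a ha using hj
  have hp1 := (Fact.out : p.Prime).one_lt
  have hanti : Antitone a := by
    apply antitone_nat_of_succ_le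
    intro e
    have h := ri_smul_dvd (PowerSeries.X : PowerSeries ℤ_[p]) _ _ (hle1 e)
    rw [← mul_smul, ← mul_smul, ← pow_succ', ← pow_succ', ha, ha] at h
    exact (Nat.pow_dvd_pow_iff_le_right hp1).1 h
  have hprod : ∀ e, ri ((PowerSeries.X : PowerSeries ℤ_[p]) ^ e • X) X =
      p ^ (∑ i ∈ Finset.range e, a i) := by
    intro e
    induction e with
    | zero => simp [ri]
    | succ e ih =>
      rw [← ri_mul (hle1 e) (hle e), ih, ha, Finset.sum_range_succ, pow_add, mul_comm]
  refine ⟨fun e => ⟨_, hprod e⟩, ?_⟩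
  obtain ⟨i₀, hi₀⟩ := WellFoundedGT.monotone_chain_condition (α := ℕᵒᵈ)
    ⟨fun i => OrderDual.toDual (a i), hanti⟩
  refine ⟨a i₀, ∑ i ∈ Finset.range i₀, a i, i₀, fun e => ?_⟩
  rw [hprod, Finset.sum_range_add, add_comm]
  congr 2
  rw [Finset.sum_congr rfl (g := fun _ => a i₀)]
  · simp [mul_comm]
  · intro i _
    exact (hi₀ (i₀ + i) (by omega)).symm

lemma p_dvd_iff (p : ℕ) [Fact p.Prime] (f : PowerSeries ℤ_[p]) :
    (p : PowerSeries ℤ_[p]) ∣ f ↔ ∀ i, (p : ℤ_[p]) ∣ PowerSeries.coeff i f := by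
  have hC : (p : PowerSeries ℤ_[p]) = PowerSeries.C (p : ℤ_[p]) := by simp
  constructor
  · rintro ⟨g, rfl⟩ i
    rw [hC, PowerSeries.coeff_C_mul]; exact dvd_mul_right _ _
  · intro h
    choose g hg using h
    refine ⟨PowerSeries.mk g, ?_⟩
    ext i
    rw [hC, PowerSeries.coeff_C_mul, PowerSeries.coeff_mk, hg]

lemma omega_mod (p : ℕ) [Fact p.Prime] (n : ℕ) :
    (p : PowerSeries ℤ_[p]) ∣ omegaN p n - PowerSeries.X ^ (p ^ n) := by
  obtain ⟨r, hr⟩ := exists_add_pow_prime_pow_eq (Fact.out : p.Prime)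
    (1 : PowerSeries ℤ_[p]) PowerSeries.X n
  rw [omegaN, hr, one_pow]
  exact ⟨PowerSeries.X * r, by ring⟩

lemma omega_succ (p : ℕ) [Fact p.Prime] (n : ℕ) :
    omegaN p (n + 1) = (1 + omegaN p n) ^ p - 1 := by
  simp [omegaN, pow_succ, pow_mul]

lemma omega_dvd (p : ℕ) [Fact p.Prime] {m n : ℕ} (h : m ≤ n) :
    ∃ v, omegaN p n = v * omegaN p m ∧
      (p : PowerSeries ℤ_[p]) ∣ v - PowerSeries.X ^ (p ^ n - p ^ m) := by
  obtain ⟨v, hv⟩ : omegaN p m ∣ omegaN p n := by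
    obtain ⟨k, rfl⟩ := Nat.exists_eq_add_of_le h
    simp only [omegaN, pow_add, pow_mul]
    exact sub_one_dvd_pow_sub_one _ _
  have hmn : p ^ m ≤ p ^ n := Nat.pow_le_pow_right (Fact.out : p.Prime).pos h
  refine ⟨v, by rw [hv, mul_comm], ?_⟩
  have h1 : (p : PowerSeries ℤ_[p]) ∣ PowerSeries.X ^ (p ^ m) * (v - PowerSeries.X ^ (p ^ n - p ^ m)) := by
    obtain ⟨a, ha⟩ := omega_mod p m
    obtain ⟨b, hb⟩ := omega_mod p n
    have hx : (PowerSeries.X : PowerSeries ℤ_[p]) ^ (p ^ n) = X ^ (p ^ m) * X ^ (p ^ n - p ^ m) := by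
      rw [← pow_add, Nat.add_sub_cancel' hmn]
    refine ⟨b - a * v, ?_⟩
    rw [mul_sub, ← hx]
    linear_combination hb - v * ha - hv
  rw [p_dvd_iff] at h1 ⊢
  intro i
  have := h1 (i + p ^ m)
  rwa [PowerSeries.coeff_X_pow_mul] at this
lemma omega_ne_zero (p : ℕ) [Fact p.Prime] (n : ℕ) : omegaN p n ≠ 0 := by
  intro h
  have := omega_mod p n
  rw [h, zero_sub, dvd_neg, p_dvd_iff] at this
  have := this (p ^ n)
  rw [PowerSeries.coeff_X_pow_self] at this
  exact PadicInt.prime_p.not_dvd_one this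

lemma omega_succ' (p : ℕ) [Fact p.Prime] (n : ℕ) :
    ∃ s, IsUnit s ∧ omegaN p (n + 1) =
      omegaN p n * ((p : PowerSeries ℤ_[p]) * s + omegaN p n ^ (p - 1)) := by
  have h1 := omega_succ p n
  have h0 : PowerSeries.constantCoeff (omegaN p n) = 0 := by simp [omegaN]
  have hx := omega_ne_zero p n
  set x := omegaN p n
  have hp := (Fact.out : p.Prime)
  have h2 := add_pow_prime_eq hp x 1
  rw [add_comm x 1] at h2
  set s := ∑ k ∈ Finset.Ioo 0 p, x ^ (k - 1) * 1 ^ (p - k - 1) * ((p.choose k / p : ℕ) : PowerSeries ℤ_[p]) with hs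
  have hxp : x ^ p = x * x ^ (p - 1) := by
    rw [← pow_succ', Nat.sub_add_cancel hp.one_lt.le]
  have h3 : (1 + x) ^ p - 1 = x * (p * s + x ^ (p - 1)) := by
    rw [h2, one_pow, hxp]; ring
  refine ⟨s, ?_, by rw [h1, h3]⟩
  have h4 := geom_sum_mul (1 + x) p
  rw [add_sub_cancel_left, h3, mul_comm] at h4
  have h5 := congrArg PowerSeries.constantCoeff (mul_left_cancel₀ hx h4)
  have hp1 : p - 1 ≠ 0 := by have := hp.one_lt; omega
  simp [h0, hp1] at h5
  rw [PowerSeries.isUnit_iff_constantCoeff]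
  have hp0 : (p : ℤ_[p]) ≠ 0 := by exact_mod_cast hp.ne_zero
  have h6 : (1 : ℤ_[p]) = PowerSeries.constantCoeff s :=
    mul_left_cancel₀ hp0 (by rw [mul_one]; exact h5)
  rw [← h6]
  exact isUnit_one

lemma compare (p : ℕ) [Fact p.Prime] {M : Type*} [AddCommGroup M] [Module (PowerSeries ℤ_[p]) M]
    [Module ℤ_[p] M] [IsScalarTower ℤ_[p] (PowerSeries ℤ_[p]) M]
    {Z : Type*} [AddCommGroup Z] [Module (PowerSeries ℤ_[p]) Z]
    [Module ℤ_[p] Z] [IsScalarTower ℤ_[p] (PowerSeries ℤ_[p]) Z]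
    (f : M →ₗ[PowerSeries ℤ_[p]] Z) (hf : Function.Surjective f)
    (U : Submodule (PowerSeries ℤ_[p]) M) (hU : U ≤ LinearMap.ker f)
    (hr : ri U (LinearMap.ker f) ≠ 0) (hZ : Finite (Submodule.torsion ℤ_[p] Z)) :
    Module.finrank ℤ_[p] (M ⧸ U) = Module.finrank ℤ_[p] Z ∧
    Finite (Submodule.torsion ℤ_[p] (M ⧸ U)) ∧ Nat.card (Submodule.torsion ℤ_[p] (M ⧸ U)) =
      ri U (LinearMap.ker f) * Nat.card (Submodule.torsion ℤ_[p] Z) := by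
  let g : (M ⧸ U) →ₗ[ℤ_[p]] Z := (U.liftQ f hU).restrictScalars ℤ_[p]
  have hg : Function.Surjective g := by
    intro z
    obtain ⟨m, rfl⟩ := hf z
    exact ⟨Submodule.Quotient.mk m, rfl⟩
  have hk : Nat.card (LinearMap.ker g) = ri U (LinearMap.ker f) := by
    rw [ri_card, ← Submodule.ker_liftQ U f hU]
    rfl
  rw [← hk] at hr ⊢
  exact surj_lemma p g hg (Nat.finite_of_card_ne_zero hr) hZ

/-- conclusion -/
def Good (p : ℕ) [Fact p.Prime] (M : Type*) [AddCommGroup M] [Module (PowerSeries ℤ_[p]) M]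
    [Module ℤ_[p] M] [IsScalarTower ℤ_[p] (PowerSeries ℤ_[p]) M] : Prop :=
    ∃ (r μ lam : ℕ) (ν : ℤ) (N : ℕ), ∀ n ≥ N,
      Module.finrank ℤ_[p]
        (M ⧸ (omegaN p n • (⊤ : Submodule (PowerSeries ℤ_[p]) M))) = r ∧
      Finite (Submodule.torsion ℤ_[p]
        (M ⧸ (omegaN p n • (⊤ : Submodule (PowerSeries ℤ_[p]) M)))) ∧
      (Nat.card (Submodule.torsion ℤ_[p]
        (M ⧸ (omegaN p n • (⊤ : Submodule (PowerSeries ℤ_[p]) M)))) : ℝ)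
        = (p : ℝ) ^ (((μ * p ^ n + lam * n : ℕ) : ℤ) + ν)

lemma good_ext (p : ℕ) [Fact p.Prime] {M : Type*} [AddCommGroup M] [Module (PowerSeries ℤ_[p]) M]
    [Module ℤ_[p] M] [IsScalarTower ℤ_[p] (PowerSeries ℤ_[p]) M]
    [Module.Finite (PowerSeries ℤ_[p]) M]
    (A : Submodule (PowerSeries ℤ_[p]) M) (hA : ∀ x ∈ A, (p : PowerSeries ℤ_[p]) • x = 0)
    (h : Good p (M ⧸ A)) : Good p M := by
  obtain ⟨r, μ, lam, ν, N, hN⟩ := h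
  -- stabilization
  have hmono : Monotone fun n => A.comap (LinearMap.lsmul (PowerSeries ℤ_[p]) M (omegaN p n)) := by
    intro m n hmn x hx
    obtain ⟨v, hv, -⟩ := omega_dvd p hmn
    simp only [Submodule.mem_comap, LinearMap.lsmul_apply] at hx ⊢
    rw [hv, mul_smul]
    exact A.smul_mem _ hx
  obtain ⟨n₀, hn₀⟩ := WellFoundedGT.monotone_chain_condition ⟨_, hmono⟩
  set B := A ⊓ omegaN p n₀ • (⊤ : Submodule (PowerSeries ℤ_[p]) M) with hB
  have hBA : ∀ x ∈ B, (p : PowerSeries ℤ_[p]) • x = 0 := fun x hx => hA x hx.1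
  have hpow : ∀ (a b : PowerSeries ℤ_[p]) (x : M), x ∈ A → (p : PowerSeries ℤ_[p]) ∣ a - b →
      a • x = b • x := by
    rintro a b x hx ⟨c, hc⟩
    rw [← sub_eq_zero, ← sub_smul, hc, mul_comm, mul_smul, hA x hx, smul_zero]
  have hinter : ∀ n ≥ n₀, omegaN p n • (⊤ : Submodule (PowerSeries ℤ_[p]) M) ⊓ A =
      (PowerSeries.X : PowerSeries ℤ_[p]) ^ (p ^ n - p ^ n₀) • B := by
    intro n hn
    obtain ⟨v, hv, hv'⟩ := omega_dvd p hn
    ext x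
    rw [Submodule.mem_inf, Submodule.mem_smul_pointwise_iff_exists,
      Submodule.mem_smul_pointwise_iff_exists]
    constructor
    · rintro ⟨⟨y, -, rfl⟩, hy⟩
      have hy' : y ∈ A.comap (LinearMap.lsmul (PowerSeries ℤ_[p]) M (omegaN p n₀)) := by
        have : _ = _ := hn₀ n hn
        simp only [OrderHom.coe_mk] at this
        rw [this]; exact hy
      have hy2 : omegaN p n₀ • y ∈ A := hy'
      refine ⟨omegaN p n₀ • y, ⟨hy2, Submodule.smul_mem_pointwise_smul _ _ _ trivial⟩, ?_⟩
      rw [hv, mul_smul]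
      exact (hpow _ _ _ hy2 hv').symm
    · rintro ⟨y, ⟨hy, hy2⟩, rfl⟩
      refine ⟨?_, A.smul_mem _ hy⟩
      obtain ⟨z, -, rfl⟩ := (Submodule.mem_smul_pointwise_iff_exists _ _ _).1 hy2
      refine ⟨z, trivial, ?_⟩
      rw [hv, mul_smul]
      exact hpow _ _ _ hy hv'
  obtain ⟨-, μ', c, i₀, hc⟩ := ri_chain p B hBA
  obtain ⟨b, hb⟩ : ∃ b, ri B A = p ^ b := by
    obtain ⟨j, hj⟩ := (ri_chain p A hA).1 (p ^ n₀)
    have hle : (PowerSeries.X : PowerSeries ℤ_[p]) ^ (p ^ n₀) • A ≤ B := by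
      intro x hx
      obtain ⟨y, hy, rfl⟩ := (Submodule.mem_smul_pointwise_iff_exists _ _ _).1 hx
      refine ⟨A.smul_mem _ hy, ?_⟩
      rw [← hpow _ _ _ hy (omega_mod p n₀)]
      exact Submodule.smul_mem_pointwise_smul _ _ _ trivial
    have : ri B A ∣ p ^ j := by
      rw [← hj]
      exact AddSubgroup.relIndex_dvd_of_le_left _ hle
    obtain ⟨b, -, hb⟩ := (Nat.dvd_prime_pow Fact.out).1 this
    exact ⟨b, hb⟩
  have hBle : B ≤ A := inf_le_left
  have hppos : (p : ℝ) ≠ 0 := by exact_mod_cast (Fact.out : p.Prime).ne_zero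
  refine ⟨r, μ + μ', lam, ν - μ' * (p ^ n₀ + i₀) + c + b, max N (n₀ + i₀ + 1), fun n hn => ?_⟩
  have hnN : N ≤ n := le_trans (le_max_left _ _) hn
  have hn0 : n₀ + i₀ + 1 ≤ n := le_trans (le_max_right _ _) hn
  have hsize : p ^ n₀ + i₀ ≤ p ^ n := by
    obtain ⟨k, rfl⟩ := Nat.exists_eq_add_of_le (show n₀ + i₀ ≤ n by omega)
    rw [pow_add, pow_add]
    have h1 : i₀ < p ^ i₀ := Nat.lt_pow_self (Fact.out : p.Prime).one_lt
    have h2 : 0 < p ^ n₀ := Nat.pow_pos (Fact.out : p.Prime).pos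
    have h3 : 0 < p ^ k := Nat.pow_pos (Fact.out : p.Prime).pos
    have h4 : p ^ n₀ * (i₀ + 1) ≤ p ^ n₀ * p ^ i₀ := Nat.mul_le_mul_left _ h1
    have h5 : p ^ n₀ * p ^ i₀ * 1 ≤ p ^ n₀ * p ^ i₀ * p ^ k := Nat.mul_le_mul_left _ h3
    nlinarith
  obtain ⟨e, he⟩ := Nat.exists_eq_add_of_le hsize
  obtain ⟨h1, h2, h3⟩ := hN n hnN
  let f : M →ₗ[PowerSeries ℤ_[p]]
      ((M ⧸ A) ⧸ (omegaN p n • (⊤ : Submodule (PowerSeries ℤ_[p]) (M ⧸ A)))) :=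
    (Submodule.mkQ _).comp A.mkQ
  have hf : Function.Surjective f := (Submodule.mkQ_surjective _).comp (Submodule.mkQ_surjective _)
  have hker : LinearMap.ker f = A ⊔ omegaN p n • (⊤ : Submodule (PowerSeries ℤ_[p]) M) := by
    rw [LinearMap.ker_comp, Submodule.ker_mkQ]
    have : omegaN p n • (⊤ : Submodule (PowerSeries ℤ_[p]) (M ⧸ A)) =
        (omegaN p n • (⊤ : Submodule (PowerSeries ℤ_[p]) M)).map A.mkQ := by
      ext z
      rw [Submodule.mem_smul_pointwise_iff_exists, Submodule.mem_map]
      constructor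
      · rintro ⟨y, -, rfl⟩
        obtain ⟨m, rfl⟩ := Submodule.mkQ_surjective _ y
        exact ⟨omegaN p n • m, Submodule.smul_mem_pointwise_smul _ _ _ trivial, map_smul _ _ _⟩
      · rintro ⟨y, hy, rfl⟩
        obtain ⟨z, -, rfl⟩ := (Submodule.mem_smul_pointwise_iff_exists _ _ _).1 hy
        exact ⟨A.mkQ z, trivial, (map_smul _ _ _).symm⟩
    rw [this, Submodule.comap_map_mkQ]
  have hri : ri (omegaN p n • (⊤ : Submodule (PowerSeries ℤ_[p]) M)) (LinearMap.ker f) =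
      p ^ (μ' * e + c + b) := by
    have hri1 : ri (omegaN p n • (⊤ : Submodule (PowerSeries ℤ_[p]) M)) (LinearMap.ker f) =
        ri (omegaN p n • (⊤ : Submodule (PowerSeries ℤ_[p]) M)) A := by
      rw [hker, ri, Submodule.sup_toAddSubgroup, AddSubgroup.relIndex_sup_right, ri]
    have hri2 : ri (omegaN p n • (⊤ : Submodule (PowerSeries ℤ_[p]) M)) A =
        ri (omegaN p n • (⊤ : Submodule (PowerSeries ℤ_[p]) M) ⊓ A) A := 
      (AddSubgroup.inf_relIndex_right _ _).symm
    rw [hri1, hri2, hinter n (by omega)]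
    have : p ^ n - p ^ n₀ = i₀ + e := by omega
    rw [this, ← ri_mul _ hBle, hc, hb, ← pow_add]
    intro x hx
    obtain ⟨y, hy, rfl⟩ := (Submodule.mem_smul_pointwise_iff_exists _ _ _).1 hx
    exact B.smul_mem _ hy
  obtain ⟨g1, g2, g3⟩ := compare p f hf (omegaN p n • (⊤ : Submodule (PowerSeries ℤ_[p]) M))
    (by rw [hker]; exact le_sup_right)
    (by rw [hri]; exact pow_ne_zero _ (Fact.out : p.Prime).ne_zero) h2
  refine ⟨g1.trans h1, g2, ?_⟩
  rw [g3, hri, Nat.cast_mul, h3, Nat.cast_pow, ← zpow_natCast, ← zpow_add₀ hppos]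
  congr 1
  have he' : ((p : ℤ)) ^ n = p ^ n₀ + i₀ + e := by exact_mod_cast he
  push_cast
  rw [he']
  ring

lemma exists_g (p : ℕ) [Fact p.Prime] {M : Type*} [AddCommGroup M] [Module (PowerSeries ℤ_[p]) M]
    [Module.Finite (PowerSeries ℤ_[p]) M] (htors : Module.IsTorsion (PowerSeries ℤ_[p]) M)
    (hfree : ∀ x : M, (p : PowerSeries ℤ_[p]) • x = 0 → x = 0) :
    ∃ g : PowerSeries ℤ_[p], ¬ (p : PowerSeries ℤ_[p]) ∣ g ∧ ∀ x : M, g • x = 0 := by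
  obtain ⟨f, hf, hf0⟩ := Submodule.annihilator_top_inter_nonZeroDivisors htors
  have hf0 : f ≠ 0 := nonZeroDivisors.ne_zero hf0
  have hnu : ¬ IsUnit (p : PowerSeries ℤ_[p]) := by
    intro h
    have := (p_dvd_iff p 1).1 h.dvd 0
    simp only [PowerSeries.coeff_zero_one] at this
    exact PadicInt.prime_p.not_dvd_one this
  have hfm : FiniteMultiplicity (p : PowerSeries ℤ_[p]) f :=
    FiniteMultiplicity.of_not_isUnit hnu hf0
  obtain ⟨g, hg, hg'⟩ := hfm.exists_eq_pow_mul_and_not_dvd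
  refine ⟨g, hg', fun x => ?_⟩
  have hx : f • x = 0 := (Submodule.mem_annihilator.1 hf) x trivial
  rw [hg, mul_smul] at hx
  have key : ∀ (m : ℕ) (y : M), (p : PowerSeries ℤ_[p]) ^ m • y = 0 → y = 0 := by
    intro m
    induction m with
    | zero => intro y hy; simpa using hy
    | succ m ih =>
      intro y hy
      rw [pow_succ, mul_smul] at hy
      exact hfree _ (ih _ hy)
  exact key _ _ hx

lemma base_fin (p : ℕ) [Fact p.Prime] {M : Type*} [AddCommGroup M] [Module (PowerSeries ℤ_[p]) M]
    [Module ℤ_[p] M] [IsScalarTower ℤ_[p] (PowerSeries ℤ_[p]) M]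
    [Module.Finite (PowerSeries ℤ_[p]) M] (g : PowerSeries ℤ_[p])
    (hg : ¬ (p : PowerSeries ℤ_[p]) ∣ g) (hgM : ∀ x : M, g • x = 0) :
    Module.Finite ℤ_[p] M ∧ ∃ d : ℕ, ∀ x : M, (PowerSeries.X : PowerSeries ℤ_[p]) ^ d • x ∈
      (p : PowerSeries ℤ_[p]) • (⊤ : Submodule (PowerSeries ℤ_[p]) M) := by
  have hres : ∀ a : ℤ_[p], IsLocalRing.residue ℤ_[p] a = 0 ↔ (p : ℤ_[p]) ∣ a := by
    intro a
    rw [IsLocalRing.residue_eq_zero_iff, PadicInt.maximalIdeal_eq_span_p, Ideal.mem_span_singleton]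
  have hg0 : g.map (IsLocalRing.residue ℤ_[p]) ≠ 0 := by
    intro h
    apply hg
    rw [p_dvd_iff]
    intro i
    rw [← hres, ← PowerSeries.coeff_map, h, map_zero]
  set d := (g.map (IsLocalRing.residue ℤ_[p])).order.toNat with hd
  constructor
  · obtain ⟨s, hs⟩ := (inferInstance : Module.Finite (PowerSeries ℤ_[p]) M).fg_top
    classical
    refine ⟨(Finset.range d ×ˢ s).image
      (fun t => (PowerSeries.X : PowerSeries ℤ_[p]) ^ t.1 • t.2), ?_⟩
    rw [eq_top_iff]
    intro w _
    have key : ∀ (f : PowerSeries ℤ_[p]), ∀ x ∈ s, f • x ∈ Submodule.span ℤ_[p]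
        (((Finset.range d ×ˢ s).image
          (fun t => (PowerSeries.X : PowerSeries ℤ_[p]) ^ t.1 • t.2) : Finset M) : Set M) := by
      intro f x hx
      obtain ⟨q, r, hqr⟩ := PowerSeries.exists_isWeierstrassDivision f hg0
      have hdeg : r.degree < d := hqr.degree_lt
      have hfx : f • x = (r : PowerSeries ℤ_[p]) • x := by
        rw [hqr.eq_mul_add, add_smul, mul_comm, mul_smul, hgM, smul_zero, zero_add]
      rw [hfx]
      have hr : (r : PowerSeries ℤ_[p]) = ∑ i ∈ Finset.range d,
          PowerSeries.C (r.coeff i) * PowerSeries.X ^ i := by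
        ext m
        rw [Polynomial.coeff_coe, map_sum]
        simp only [PowerSeries.coeff_C_mul, PowerSeries.coeff_X_pow, mul_ite, mul_one, mul_zero,
          Finset.sum_ite_eq, Finset.mem_range]
        split_ifs with hm
        · rfl
        · exact Polynomial.coeff_eq_zero_of_degree_lt
            (lt_of_lt_of_le hdeg (by exact_mod_cast not_lt.1 hm))
      rw [hr, Finset.sum_smul]
      refine Submodule.sum_mem _ fun i hi => ?_
      rw [mul_smul]
      have : PowerSeries.C (r.coeff i) • ((PowerSeries.X : PowerSeries ℤ_[p]) ^ i • x) =
          r.coeff i • ((PowerSeries.X : PowerSeries ℤ_[p]) ^ i • x) :=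
        algebraMap_smul (PowerSeries ℤ_[p]) _ _
      rw [this]
      refine Submodule.smul_mem _ _ (Submodule.subset_span ?_)
      rw [Finset.mem_coe, Finset.mem_image]
      exact ⟨(i, x), Finset.mem_product.2 ⟨hi, hx⟩, rfl⟩
    have hw : w ∈ Submodule.span (PowerSeries ℤ_[p]) (s : Set M) := by
      rw [hs]; trivial
    obtain ⟨c, -, rfl⟩ := Submodule.mem_span_finset.1 hw
    exact Submodule.sum_mem _ fun x hx => key _ _ hx
  · refine ⟨d, fun x => ?_⟩
    have h1 := g.eq_X_pow_mul_shift_add_trunc d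
    have hu : IsUnit (PowerSeries.mk fun i ↦ PowerSeries.coeff (i + d) g) :=
      (PowerSeries.IsWeierstrassDivisor.of_map_ne_zero hg0).isUnit_shift
    obtain ⟨h, hh⟩ : (p : PowerSeries ℤ_[p]) ∣ (g.trunc d : PowerSeries ℤ_[p]) := by
      rw [p_dvd_iff]
      intro i
      rw [Polynomial.coeff_coe, PowerSeries.coeff_trunc]
      split_ifs with hi
      · rw [← hres, ← PowerSeries.coeff_map]
        exact PowerSeries.coeff_of_lt_order_toNat _ hi
      · exact dvd_zero _
    obtain ⟨v, hv⟩ := hu.exists_right_inv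
    rw [hh] at h1
    have h2 : (PowerSeries.X : PowerSeries ℤ_[p]) ^ d = v * g + p * (-(h * v)) := by
      linear_combination (-v) * h1 - X ^ d * hv
    rw [h2, add_smul, mul_smul, hgM, smul_zero, zero_add, mul_smul]
    exact Submodule.smul_mem_pointwise_smul _ _ _ trivial

lemma tors_fin (p : ℕ) [Fact p.Prime] (X : Type*) [AddCommGroup X] [Module ℤ_[p] X]
    [Module.Finite ℤ_[p] X] : Finite (Submodule.torsion ℤ_[p] X) ∧
      ∃ j, Nat.card (Submodule.torsion ℤ_[p] X) = p ^ j := by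
  obtain ⟨a, ha, ha0⟩ := Submodule.annihilator_top_inter_nonZeroDivisors
    (Submodule.torsion_isTorsion (R := ℤ_[p]) (M := X))
  have ha0 : a ≠ 0 := nonZeroDivisors.ne_zero ha0
  have hs := PadicInt.unitCoeff_spec ha0
  refine fin_card p _ a.valuation fun x => ?_
  have hx : a • x = 0 := (Submodule.mem_annihilator.1 ha) x trivial
  rw [hs, mul_smul] at hx
  exact (IsUnit.smul_eq_zero (PadicInt.unitCoeff ha0).isUnit).1 hx

lemma good_base (p : ℕ) [Fact p.Prime] (hp : Odd p)
    {M : Type*} [AddCommGroup M] [Module (PowerSeries ℤ_[p]) M]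
    [Module ℤ_[p] M] [IsScalarTower ℤ_[p] (PowerSeries ℤ_[p]) M]
    [Module.Finite (PowerSeries ℤ_[p]) M] (htors : Module.IsTorsion (PowerSeries ℤ_[p]) M)
    (hfree : ∀ x : M, (p : PowerSeries ℤ_[p]) • x = 0 → x = 0) : Good p M := by
  obtain ⟨g, hg, hgM⟩ := exists_g p htors hfree
  obtain ⟨hfin, d, hd⟩ := base_fin p g hg hgM
  have hpp := (Fact.out : p.Prime)
  have hp3 : 3 ≤ p := by
    have := hpp.two_le
    rcases hp with ⟨k, hk⟩
    omega
  have hωp : ∀ n ≥ d, ∀ x : M, ∃ y : M, omegaN p n • x = (p : PowerSeries ℤ_[p]) • y := by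
    intro n hn x
    obtain ⟨c, hc⟩ := omega_mod p n
    have hle : d ≤ p ^ n := hn.le.trans (Nat.lt_pow_self hpp.one_lt).le
    obtain ⟨k, hk⟩ := Nat.exists_eq_add_of_le hle
    obtain ⟨y, -, hy⟩ := (Submodule.mem_smul_pointwise_iff_exists _ _ _).1 (hd ((PowerSeries.X : PowerSeries ℤ_[p]) ^ k • x))
    refine ⟨c • x + y, ?_⟩
    rw [smul_add, hy, ← mul_smul, ← mul_smul, ← pow_add, ← hk, ← add_smul, ← hc, sub_add_cancel]
  have hstep : ∀ n ≥ d, omegaN p (n + 1) • (⊤ : Submodule (PowerSeries ℤ_[p]) M) =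
      (p : PowerSeries ℤ_[p]) • omegaN p n • (⊤ : Submodule (PowerSeries ℤ_[p]) M) := by
    intro n hn
    obtain ⟨s, hs, hω⟩ := omega_succ' p n
    set ω := omegaN p n
    have hpow : ω ^ (p - 1) = ω ^ (p - 3) * (ω * ω) := by
      rw [← pow_two, ← pow_add]; congr 1; omega
    have hsq : ∀ x : M, ∃ y : M, (ω * ω ^ (p - 1)) • x =
        (p : PowerSeries ℤ_[p]) • (p : PowerSeries ℤ_[p]) • ω • y := by
      intro x
      obtain ⟨y, hy⟩ := hωp n hn (ω ^ (p - 3) • x)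
      obtain ⟨z, hz⟩ := hωp n hn y
      refine ⟨z, ?_⟩
      have : ω * ω ^ (p - 1) = ω * (ω * (ω * ω ^ (p - 3))) := by rw [hpow]; ring
      rw [this, mul_smul, mul_smul, mul_smul, hy, smul_comm ω (p : PowerSeries ℤ_[p]), hz,
        smul_comm ω (p : PowerSeries ℤ_[p]), smul_comm ω (p : PowerSeries ℤ_[p])]
    apply le_antisymm
    · intro x hx
      obtain ⟨y, -, rfl⟩ := (Submodule.mem_smul_pointwise_iff_exists _ _ _).1 hx
      obtain ⟨z, hz⟩ := hsq y
      have : omegaN p (n + 1) • y = (p : PowerSeries ℤ_[p]) • ω •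
          (s • y + (p : PowerSeries ℤ_[p]) • z) := by
        rw [hω, mul_add, add_smul, hz]
        simp only [smul_add, ← mul_smul]
        congr 2 <;> ring
      rw [this]
      exact Submodule.smul_mem_pointwise_smul _ _ _ (Submodule.smul_mem_pointwise_smul _ _ _ trivial)
    · apply Submodule.le_of_le_smul_of_le_jacobson_bot
        (I := Ideal.span {(p : PowerSeries ℤ_[p])}) (IsNoetherian.noetherian _)
      · rw [IsLocalRing.jacobson_eq_maximalIdeal _ bot_ne_top, Ideal.span_singleton_le_iff_mem,
          IsLocalRing.mem_maximalIdeal, mem_nonunits_iff, PowerSeries.isUnit_iff_constantCoeff]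
        simp only [map_natCast]
        exact PadicInt.prime_p.not_isUnit
      · intro x hx
        obtain ⟨y, hy, rfl⟩ := (Submodule.mem_smul_pointwise_iff_exists _ _ _).1 hx
        obtain ⟨x, -, rfl⟩ := (Submodule.mem_smul_pointwise_iff_exists _ _ _).1 hy
        obtain ⟨v, hv⟩ := hs.exists_right_inv
        obtain ⟨z, hz⟩ := hsq (v • x)
        have : (p : PowerSeries ℤ_[p]) • ω • x = omegaN p (n + 1) • v • x +
            (p : PowerSeries ℤ_[p]) • (p : PowerSeries ℤ_[p]) • ω • (-z) := by
          rw [smul_neg, smul_neg, smul_neg, ← hz, hω, mul_add, add_smul, add_neg_cancel_right,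
            ← mul_smul, ← mul_smul]
          congr 1
          linear_combination (-p * ω) * hv
        rw [this, Submodule.ideal_span_singleton_smul]
        refine Submodule.add_mem_sup (Submodule.smul_mem_pointwise_smul _ _ _ trivial) ?_
        exact Submodule.smul_mem_pointwise_smul _ _ _ (Submodule.smul_mem_pointwise_smul _ _ _
          (Submodule.smul_mem_pointwise_smul _ _ _ trivial))
  set W := omegaN p d • (⊤ : Submodule (PowerSeries ℤ_[p]) M) with hW
  have hWe : ∀ e, omegaN p (d + e) • (⊤ : Submodule (PowerSeries ℤ_[p]) M) =
      (p : PowerSeries ℤ_[p]) ^ e • W := by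
    intro e
    induction e with
    | zero => simp [hW]
    | succ e ih => rw [← add_assoc, hstep _ (by omega), ih, pow_succ', mul_smul]
  have hle : ∀ (a : PowerSeries ℤ_[p]) (U : Submodule (PowerSeries ℤ_[p]) M), a • U ≤ U := by
    intro a U x hx
    obtain ⟨y, hy, rfl⟩ := (Submodule.mem_smul_pointwise_iff_exists _ _ _).1 hx
    exact U.smul_mem _ hy
  obtain ⟨lam, hlam⟩ : ∃ j, ri ((p : PowerSeries ℤ_[p]) • W) W = p ^ j := by
    rw [ri_card]
    have hN : IsNoetherian ℤ_[p] (M ⧸ (p : PowerSeries ℤ_[p]) • W) := inferInstance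
    have hF : Module.Finite ℤ_[p] ((W.map ((p : PowerSeries ℤ_[p]) • W).mkQ).restrictScalars ℤ_[p]) :=
      inferInstance
    refine (fin_card p ((W.map ((p : PowerSeries ℤ_[p]) • W).mkQ).restrictScalars ℤ_[p]) 1 ?_).2
    rintro ⟨x, hx⟩
    obtain ⟨w, hw, rfl⟩ := hx
    apply Subtype.ext
    rw [pow_one, Nat.cast_smul_eq_nsmul]
    change p • ((p : PowerSeries ℤ_[p]) • W).mkQ w = 0
    rw [← Nat.cast_smul_eq_nsmul (PowerSeries ℤ_[p]), ← map_smul, Submodule.mkQ_apply,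
      Submodule.Quotient.mk_eq_zero]
    exact Submodule.smul_mem_pointwise_smul _ _ _ hw
  have hlame : ∀ e, ri ((p : PowerSeries ℤ_[p]) ^ e • W) W = p ^ (lam * e) := by
    intro e
    induction e with
    | zero => simp [ri]
    | succ e ih =>
      have h1 := ri_smul (p : PowerSeries ℤ_[p]) ((p : PowerSeries ℤ_[p]) ^ e • W) W hfree
      rw [pow_succ', mul_smul, ← ri_mul (smul_mono_right _ (hle _ _)) (hle _ W), h1, hlam, ih,
        ← pow_add]
      rfl
  obtain ⟨hft, j, hj⟩ := tors_fin p (M ⧸ W)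
  have hppos : (p : ℝ) ≠ 0 := by exact_mod_cast hpp.ne_zero
  refine ⟨Module.finrank ℤ_[p] (M ⧸ W), 0, lam, j - lam * d, d, fun n hn => ?_⟩
  obtain ⟨e, rfl⟩ := Nat.exists_eq_add_of_le hn
  rw [hWe]
  have hker : LinearMap.ker W.mkQ = W := Submodule.ker_mkQ _
  obtain ⟨g1, g2, g3⟩ := compare p W.mkQ (Submodule.mkQ_surjective _)
    ((p : PowerSeries ℤ_[p]) ^ e • W) (by rw [hker]; exact hle _ _)
    (by rw [hker, hlame]; exact pow_ne_zero _ hpp.ne_zero) hft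
  refine ⟨g1, g2, ?_⟩
  rw [g3, hker, hlame, hj, Nat.cast_mul, Nat.cast_pow, Nat.cast_pow, ← zpow_natCast, ← zpow_natCast,
    ← zpow_add₀ hppos]
  congr 1
  push_cast
  ring

lemma good_all (p : ℕ) [Fact p.Prime] (hp : Odd p) (k : ℕ) :
    ∀ (M : Type*) [AddCommGroup M] [Module (PowerSeries ℤ_[p]) M]
    [Module ℤ_[p] M] [IsScalarTower ℤ_[p] (PowerSeries ℤ_[p]) M]
    [Module.Finite (PowerSeries ℤ_[p]) M] (_ : Module.IsTorsion (PowerSeries ℤ_[p]) M)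
    (_ : ∀ x : M, (p : PowerSeries ℤ_[p]) ^ (k + 1) • x = 0 → (p : PowerSeries ℤ_[p]) ^ k • x = 0),
      Good p M := by
  induction k with
  | zero =>
    intro M _ _ _ _ _ ht h
    exact good_base p hp ht (by simpa using h)
  | succ k ih =>
    intro M _ _ _ _ _ ht h
    have hmem : ∀ x, x ∈ Submodule.torsionBy (PowerSeries ℤ_[p]) M (p : PowerSeries ℤ_[p]) ↔
        (p : PowerSeries ℤ_[p]) • x = 0 := fun x => Submodule.mem_torsionBy_iff _ _
    refine good_ext p (Submodule.torsionBy (PowerSeries ℤ_[p]) M (p : PowerSeries ℤ_[p]))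
      (fun x hx => (hmem x).1 hx) (ih _ ?_ ?_)
    · intro x
      obtain ⟨m, rfl⟩ := Submodule.mkQ_surjective _ x
      obtain ⟨a, ha⟩ := @ht m
      refine ⟨a, ?_⟩
      have ha' : (a : PowerSeries ℤ_[p]) • m = 0 := ha
      have := map_smul (Submodule.mkQ (Submodule.torsionBy (PowerSeries ℤ_[p]) M
        (p : PowerSeries ℤ_[p]))) (a : PowerSeries ℤ_[p]) m
      rw [ha', map_zero] at this
      exact this.symm
    · intro x
      obtain ⟨m, rfl⟩ := Submodule.mkQ_surjective _ x
      rw [← map_smul, ← map_smul, Submodule.mkQ_apply, Submodule.mkQ_apply,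
        Submodule.Quotient.mk_eq_zero, Submodule.Quotient.mk_eq_zero, hmem, hmem, ← mul_smul,
        ← mul_smul, ← pow_succ', ← pow_succ']
      exact h m

theorem statement1 (p : ℕ) [Fact p.Prime] (hp : Odd p)
    (M : Type*) [AddCommGroup M] [Module (PowerSeries ℤ_[p]) M]
    [Module ℤ_[p] M] [IsScalarTower ℤ_[p] (PowerSeries ℤ_[p]) M]
    [Module.Finite (PowerSeries ℤ_[p]) M]
    (htors : Module.IsTorsion (PowerSeries ℤ_[p]) M) :
    ∃ (r μ lam : ℕ) (ν : ℤ) (N : ℕ), ∀ n ≥ N,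
      Module.finrank ℤ_[p]
        (M ⧸ (Ideal.span {omegaN p n} • (⊤ : Submodule (PowerSeries ℤ_[p]) M))) = r ∧
      Finite (Submodule.torsion ℤ_[p]
        (M ⧸ (Ideal.span {omegaN p n} • (⊤ : Submodule (PowerSeries ℤ_[p]) M)))) ∧
      (Nat.card (Submodule.torsion ℤ_[p]
        (M ⧸ (Ideal.span {omegaN p n} • (⊤ : Submodule (PowerSeries ℤ_[p]) M)))) : ℝ)
        = (p : ℝ) ^ (((μ * p ^ n + lam * n : ℕ) : ℤ) + ν) := by
  have hmono : Monotone fun k => Submodule.torsionBy (PowerSeries ℤ_[p]) M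
      ((p : PowerSeries ℤ_[p]) ^ k) := by
    intro k l hkl x hx
    rw [Submodule.mem_torsionBy_iff] at hx ⊢
    obtain ⟨m, rfl⟩ := Nat.exists_eq_add_of_le' hkl
    rw [pow_add, mul_smul, hx, smul_zero]
  obtain ⟨k, hk⟩ := WellFoundedGT.monotone_chain_condition ⟨_, hmono⟩
  have hG : Good p M := by
    refine good_all p hp k M htors fun x hx => ?_
    have h1 : Submodule.torsionBy (PowerSeries ℤ_[p]) M ((p : PowerSeries ℤ_[p]) ^ k) =
      Submodule.torsionBy (PowerSeries ℤ_[p]) M ((p : PowerSeries ℤ_[p]) ^ (k + 1)) :=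
      hk (k + 1) (by omega)
    rw [← Submodule.mem_torsionBy_iff, h1, Submodule.mem_torsionBy_iff]
    exact hx
  obtain ⟨r, μ, lam, ν, N, h⟩ := hG
  refine ⟨r, μ, lam, ν, N, fun n hn => ?_⟩
  rw [Submodule.ideal_span_singleton_smul]
  exact h n hn
end

section
/- Let M be a finitely generated torsion Λ-module such that M/ω_nM is finite for every n ≥ 0. Then there exist nonnegative integers μ, λ, an integer ν, and N ∈ ℕ such that #(M/ω_nM) = p^{μ·p^n + λ·n + ν} for all n ≥ N. -/
open PowerSeries

namespace Iw

section gen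
variable {N : Type*} [AddCommGroup N]

theorem herb (f : N →+ N) (A : AddSubgroup N) (hA : A.map f ≤ A) :
    f.range.index * (Nat.card (f.ker ⊓ A : AddSubgroup N) * A.relIndex (A.comap f))
      = (A.map f).relIndex A * (A ⊔ f.range).index * Nat.card f.ker := by
  have h1 : f.range.relIndex A * (A ⊔ f.range).index = f.range.index := by
    rw [← AddSubgroup.relIndex_sup_right, AddSubgroup.relIndex_mul_index le_sup_right]
  have hfA : A.map f ≤ f.range ⊓ A := le_inf (AddSubgroup.map_le_range f A) hA
  have h2 : (A.map f).relIndex (f.range ⊓ A) * f.range.relIndex A = (A.map f).relIndex A := by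
    rw [← AddSubgroup.inf_relIndex_right f.range A,
      AddSubgroup.relIndex_mul_relIndex _ _ _ hfA inf_le_right]
  have hker : f.ker ≤ A.comap f := by
    intro x hx
    rw [AddSubgroup.mem_comap, (AddMonoidHom.mem_ker).1 hx]
    exact A.zero_mem
  have hAc : A ≤ A.comap f := AddSubgroup.map_le_iff_le_comap.1 hA
  have h3 : (A.map f).relIndex (f.range ⊓ A) = (A ⊔ f.ker).relIndex (A.comap f) := by
    rw [← AddSubgroup.map_comap_eq, AddSubgroup.relIndex_map_map, sup_of_le_left hker]
  have h4 : A.relIndex f.ker * (A ⊔ f.ker).relIndex (A.comap f) = A.relIndex (A.comap f) := by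
    rw [← AddSubgroup.relIndex_mul_relIndex A (A ⊔ f.ker) _ le_sup_left (sup_le hAc hker),
      AddSubgroup.relIndex_sup_left]
  have h5 : Nat.card (f.ker ⊓ A : AddSubgroup N) * A.relIndex f.ker = Nat.card f.ker := by
    rw [← AddSubgroup.relIndex_bot_left, ← AddSubgroup.relIndex_bot_left,
      ← AddSubgroup.inf_relIndex_left f.ker A,
      AddSubgroup.relIndex_mul_relIndex _ _ _ bot_le inf_le_left]
  rw [← h1, ← h2, ← h4, ← h5, h3]
  ring

theorem range_comp_index (g f : N →+ N) (hg : Function.Injective g) :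
    (g.comp f).range.index = g.range.index * f.range.index := by
  have : (g.comp f).range = f.range.map g := by rw [AddMonoidHom.map_range]
  rw [this, AddSubgroup.index_map_of_injective _ hg, mul_comm]

theorem ker_le_range (g f : N →+ N) (hg : Function.Injective g) (hc : g.comp f = f.comp g)
    (h0 : g.range.index ≠ 0) (h1 : f.range.index ≠ 0) : f.ker ≤ g.range := by
  have e1 := range_comp_index g f hg
  rw [hc] at e1
  have : (f.comp g).range = g.range.map f := by rw [AddMonoidHom.map_range]
  rw [this, AddSubgroup.index_map] at e1
  have e2 : (g.range ⊔ f.ker).index = g.range.index := Nat.eq_of_mul_eq_mul_right (Nat.pos_of_ne_zero h1) e1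
  have e3 := AddSubgroup.relIndex_mul_index (H := g.range) (K := g.range ⊔ f.ker) le_sup_left
  rw [e2] at e3
  have e4 : g.range.relIndex (g.range ⊔ f.ker) = 1 := by
    exact Nat.eq_of_mul_eq_mul_right (Nat.pos_of_ne_zero h0) (by rw [e3, one_mul])
  rw [AddSubgroup.relIndex_eq_one] at e4
  exact le_sup_right.trans e4

end gen

section mod
variable {R : Type*} [CommRing R]

/-- multiplication by `f` -/
noncomputable abbrev mm (f : R) (M : Type*) [AddCommGroup M] [Module R M] : M →+ M :=
  DistribSMul.toAddMonoidHom M f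
/-- order of the cokernel -/
noncomputable def qq (f : R) (M : Type*) [AddCommGroup M] [Module R M] : ℕ := (mm f M).range.index
/-- order of the kernel -/
noncomputable def kk (f : R) (M : Type*) [AddCommGroup M] [Module R M] : ℕ := Nat.card (mm f M).ker

variable {M : Type*} [AddCommGroup M] [Module R M]

theorem qq_eq (f : R) : qq f M = Nat.card (M ⧸ (Ideal.span {f} • (⊤ : Submodule R M))) := by
  have : (mm f M).range = (Ideal.span {f} • (⊤ : Submodule R M)).toAddSubgroup := by
    ext x
    rw [Submodule.mem_toAddSubgroup, Submodule.ideal_span_singleton_smul,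
      Submodule.mem_smul_pointwise_iff_exists]
    simp [mm, AddMonoidHom.mem_range]
  rw [qq, this]
  rfl

theorem kk_eq (f : R) : kk f M = Nat.card (Submodule.torsionBy R M f) := by
  rw [kk]
  apply Nat.card_congr
  exact Equiv.subtypeEquivRight (fun x => by simp [AddMonoidHom.mem_ker])

theorem qq_congr {f g : R} (h : ∀ x : M, f • x = g • x) : qq f M = qq g M := by
  have : mm f M = mm g M := by ext x; exact h x
  rw [qq, qq, this]

theorem kk_congr {f g : R} (h : ∀ x : M, f • x = g • x) : kk f M = kk g M := by
  have : mm f M = mm g M := by ext x; exact h x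
  rw [kk, kk, this]

theorem kk_eq_one_iff {f : R} : kk f M = 1 ↔ ∀ x : M, f • x = 0 → x = 0 := by
  rw [kk, AddSubgroup.card_eq_one, AddSubgroup.eq_bot_iff_forall]
  simp [AddMonoidHom.mem_ker]

theorem mm_inj {f : R} (h : kk f M = 1) : Function.Injective (mm f M) := by
  rw [injective_iff_map_eq_zero]
  exact kk_eq_one_iff.1 h

theorem qq_mul {f g : R} (h : kk g M = 1) : qq (g * f) M = qq g M * qq f M := by
  rw [qq, qq, qq, ← range_comp_index _ _ (mm_inj h)]
  congr 2
  ext x; simp [mul_smul]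

theorem qq_finite [Finite M] (f : R) : qq f M = kk f M := by
  have h1 := AddSubgroup.card_mul_index (mm f M).range
  have h2 := AddSubgroup.card_mul_index (mm f M).ker
  rw [AddSubgroup.index_ker, ← h1, mul_comm] at h2
  exact (Nat.eq_of_mul_eq_mul_left Nat.card_pos h2).symm

theorem ses (f : R) (A : Submodule R M) :
    qq f M * (kk f A * kk f (M ⧸ A)) = qq f A * qq f (M ⧸ A) * kk f M := by
  have h := herb (mm f M) A.toAddSubgroup (by
    rintro _ ⟨x, hx, rfl⟩
    exact A.smul_mem f hx)
  have e1 : kk f A = Nat.card ((mm f M).ker ⊓ A.toAddSubgroup : AddSubgroup M) := by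
    rw [kk, ← AddSubgroup.relIndex_bot_left, ← AddSubgroup.relIndex_bot_left,
      ← AddSubgroup.relIndex_map_map_of_injective _ _ (f := A.subtype.toAddMonoidHom)
        A.injective_subtype]
    congr 1
    · simp
    · ext x; simp [AddMonoidHom.mem_ker, Subtype.ext_iff, and_comm]
  have e2 : qq f A = (A.toAddSubgroup.map (mm f M)).relIndex A.toAddSubgroup := by
    rw [qq, ← AddSubgroup.relIndex_top_right,
      ← AddSubgroup.relIndex_map_map_of_injective _ _ (f := A.subtype.toAddMonoidHom)
        A.injective_subtype]
    congr 1
    · ext x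
      simp
      rintro y hy rfl
      exact A.smul_mem f hy
    · ext x; simp
  have hs : Function.Surjective A.mkQ.toAddMonoidHom := A.mkQ_surjective
  have e3 : qq f (M ⧸ A) = (A.toAddSubgroup ⊔ (mm f M).range).index := by
    rw [qq, ← AddSubgroup.index_comap_of_surjective _ hs]
    congr 1
    have : (mm f (M ⧸ A)).range = AddSubgroup.map A.mkQ.toAddMonoidHom (mm f M).range := by
      ext x
      obtain ⟨x, rfl⟩ := A.mkQ_surjective x
      constructor
      · rintro ⟨y, hy⟩
        obtain ⟨y, rfl⟩ := A.mkQ_surjective y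
        refine ⟨f • y, ⟨y, rfl⟩, ?_⟩
        simpa using hy
      · rintro ⟨_, ⟨y, rfl⟩, hy⟩
        refine ⟨A.mkQ y, ?_⟩
        simpa using hy
    rw [this, AddSubgroup.comap_map_eq, sup_comm]
    congr 1
    ext x; simp [AddMonoidHom.mem_ker]
  have e4 : kk f (M ⧸ A) = A.toAddSubgroup.relIndex (A.toAddSubgroup.comap (mm f M)) := by
    rw [kk, ← AddSubgroup.relIndex_bot_left]
    have : (mm f (M ⧸ A)).ker = AddSubgroup.map A.mkQ.toAddMonoidHom (A.toAddSubgroup.comap (mm f M)) := by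
      ext x
      obtain ⟨x, rfl⟩ := A.mkQ_surjective x
      constructor
      · intro h
        refine ⟨x, ?_, rfl⟩
        rw [AddMonoidHom.mem_ker] at h
        have h' : A.mkQ (f • x) = 0 := by simpa using h
        exact (Submodule.Quotient.mk_eq_zero A).1 h'
      · rintro ⟨y, hy, hxy⟩
        have hxy' : A.mkQ y = A.mkQ x := hxy
        rw [← hxy', AddMonoidHom.mem_ker]
        have : A.mkQ (f • y) = 0 := (Submodule.Quotient.mk_eq_zero A).2 hy
        simpa using this
    rw [this, ← AddSubgroup.relIndex_comap]
    congr 1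
    ext x; simp
  rw [e1, e2, e3, e4]
  exact h

theorem qq_quot_ne_zero {f : R} (A : Submodule R M) (h : qq f M ≠ 0) : qq f (M ⧸ A) ≠ 0 := by
  rw [qq] at *
  have hs : Function.Surjective A.mkQ.toAddMonoidHom := A.mkQ_surjective
  have : AddSubgroup.map A.mkQ.toAddMonoidHom (mm f M).range ≤ (mm f (M ⧸ A)).range := by
    rintro _ ⟨_, ⟨y, rfl⟩, rfl⟩
    exact ⟨A.mkQ y, by simp⟩
  intro h0
  have := AddSubgroup.index_dvd_of_le this
  rw [h0] at this
  have h2 := AddSubgroup.index_map_dvd (mm f M).range hs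
  exact h (zero_dvd_iff.1 (this.trans h2))

theorem stab [IsNoetherian R M] (f : R) : ∃ b, kk f (M ⧸ Submodule.torsionBy R M (f ^ b)) = 1 := by
  let F : ℕ →o Submodule R M := ⟨fun b => Submodule.torsionBy R M (f ^ b), fun a b hab =>
    Submodule.torsionBy_le_torsionBy_of_dvd _ _ (pow_dvd_pow f hab)⟩
  obtain ⟨b, hb⟩ := monotone_stabilizes_iff_noetherian.2 ‹IsNoetherian R M› F
  refine ⟨b, kk_eq_one_iff.2 fun x hx => ?_⟩
  obtain ⟨x, rfl⟩ := Submodule.mkQ_surjective _ x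
  rw [← map_smul, Submodule.mkQ_apply, Submodule.Quotient.mk_eq_zero, Submodule.mem_torsionBy_iff,
    ← mul_smul, ← pow_succ] at hx
  rw [Submodule.mkQ_apply, Submodule.Quotient.mk_eq_zero]
  have : F b = F (b+1) := hb _ (by omega)
  change x ∈ F b
  rw [this]
  exact hx

end mod
end Iw

namespace Iw
section lam
variable {p : ℕ} [hpp : Fact p.Prime]

theorem omega_eq (n : ℕ) : ∃ r : PowerSeries ℤ_[p],
    omegaN p n = X ^ (p ^ n) + (p : PowerSeries ℤ_[p]) * r := by
  obtain ⟨r, hr⟩ := exists_add_pow_prime_pow_eq hpp.out (1 : PowerSeries ℤ_[p]) X n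
  refine ⟨X * r, ?_⟩
  rw [omegaN, hr, one_pow]; ring

theorem const_omega (n : ℕ) : constantCoeff (omegaN p n) = 0 := by
  simp [omegaN]

theorem mem_max {f : PowerSeries ℤ_[p]} :
    f ∈ IsLocalRing.maximalIdeal (PowerSeries ℤ_[p]) ↔ constantCoeff f ∈ IsLocalRing.maximalIdeal ℤ_[p] := by
  rw [IsLocalRing.mem_maximalIdeal, IsLocalRing.mem_maximalIdeal, mem_nonunits_iff, mem_nonunits_iff,
    isUnit_iff_constantCoeff]

theorem p_mem : (p : PowerSeries ℤ_[p]) ∈ IsLocalRing.maximalIdeal (PowerSeries ℤ_[p]) := by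
  rw [mem_max, PadicInt.maximalIdeal_eq_span_p, map_natCast]
  exact Ideal.mem_span_singleton_self _

theorem jac : (⊥ : Ideal (PowerSeries ℤ_[p])).jacobson = IsLocalRing.maximalIdeal _ :=
  IsLocalRing.jacobson_eq_maximalIdeal _ bot_ne_top

theorem max_eq : IsLocalRing.maximalIdeal (PowerSeries ℤ_[p]) = Ideal.span {(p : PowerSeries ℤ_[p]), X} := by
  apply le_antisymm
  · intro f hf
    rw [mem_max, PadicInt.maximalIdeal_eq_span_p, Ideal.mem_span_singleton] at hf
    obtain ⟨c, hc⟩ := hf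
    rw [Ideal.mem_span_pair]
    have h2 : (X : PowerSeries ℤ_[p]) ∣ f - C (constantCoeff f) := by
      rw [X_dvd_iff]; simp
    obtain ⟨g, hg⟩ := h2
    refine ⟨C c, g, ?_⟩
    rw [hc, map_mul, map_natCast] at hg
    linear_combination -hg
  · rw [Ideal.span_le]
    rintro x (rfl | rfl)
    · exact p_mem
    · rw [SetLike.mem_coe]; rw [mem_max]; simp

instance : Finite (PowerSeries ℤ_[p] ⧸ IsLocalRing.maximalIdeal (PowerSeries ℤ_[p])) := by
  let φ : PowerSeries ℤ_[p] →+* ZMod p := PadicInt.toZMod.comp constantCoeff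
  have hk : RingHom.ker φ = IsLocalRing.maximalIdeal (PowerSeries ℤ_[p]) := by
    ext f
    rw [mem_max, ← PadicInt.ker_toZMod]
    rfl
  rw [← hk]
  have : Finite (ZMod p) := @Finite.of_fintype _ (ZMod.fintype p)
  exact Finite.of_injective _ (RingHom.kerLift_injective φ)

variable {M : Type*} [AddCommGroup M] [Module (PowerSeries ℤ_[p]) M]

theorem fin_of [Module.Finite (PowerSeries ℤ_[p]) M] (a b : ℕ)
    (ha : ∀ x : M, ((p : PowerSeries ℤ_[p]) ^ a) • x = 0)
    (hb : ∀ x : M, ((X : PowerSeries ℤ_[p]) ^ b) • x = 0) : Finite M := by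
  let I := Module.annihilator (PowerSeries ℤ_[p]) M
  have h1 : IsLocalRing.maximalIdeal (PowerSeries ℤ_[p]) ≤ I.radical := by
    rw [max_eq, Ideal.span_le]
    rintro x (rfl | rfl)
    · exact ⟨a, Module.mem_annihilator.2 ha⟩
    · exact ⟨b, Module.mem_annihilator.2 hb⟩
  obtain ⟨k, hk⟩ := Ideal.exists_pow_le_of_le_radical_of_fg_radical h1 (IsNoetherian.noetherian _)
  have := Ideal.finite_quotient_pow (IsNoetherian.noetherian
    (IsLocalRing.maximalIdeal (PowerSeries ℤ_[p]))) k
  have : Finite (PowerSeries ℤ_[p] ⧸ I) :=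
    Finite.of_surjective _ (Ideal.Quotient.factor_surjective hk)
  let : Module (PowerSeries ℤ_[p] ⧸ I) M := Module.IsTorsionBySet.module
    (Module.isTorsionBySet_annihilator (PowerSeries ℤ_[p]) M)
  have : IsScalarTower (PowerSeries ℤ_[p]) (PowerSeries ℤ_[p] ⧸ I) M :=
    Module.IsTorsionBySet.isScalarTower _
  have : Module.Finite (PowerSeries ℤ_[p] ⧸ I) M := Module.Finite.of_restrictScalars_finite
    (PowerSeries ℤ_[p]) _ _
  exact Module.finite_of_finite (PowerSeries ℤ_[p] ⧸ I)

theorem card_pow (M : Type*) [AddCommGroup M] [Module (PowerSeries ℤ_[p]) M] [Finite M] :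
    ∃ k, Nat.card M = p ^ k := by
  refine ⟨_, Nat.eq_prime_pow_of_unique_prime_dvd Nat.card_pos.ne' fun {d} hd hdvd => ?_⟩
  by_contra hne
  have : Fact d.Prime := ⟨hd⟩
  obtain ⟨x, hx⟩ := exists_prime_addOrderOf_dvd_card' d hdvd
  have h1 : (d : PowerSeries ℤ_[p]) • x = 0 := by
    rw [Nat.cast_smul_eq_nsmul, ← hx, addOrderOf_nsmul_eq_zero]
  have hu : IsUnit (d : PowerSeries ℤ_[p]) := by
    rw [isUnit_iff_constantCoeff, map_natCast, PadicInt.isUnit_iff]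
    rw [PadicInt.norm_natCast_eq_one_iff]
    exact (Nat.coprime_primes hpp.out hd).2 (Ne.symm hne)
  rw [hu.smul_eq_zero] at h1
  rw [h1, addOrderOf_zero] at hx
  exact hd.one_lt.ne hx

theorem exists_X_pow {G : PowerSeries ℤ_[p]} (hG : ¬ (p : PowerSeries ℤ_[p]) ∣ G) :
    ∃ (k : ℕ) (u v : PowerSeries ℤ_[p]), X ^ k = u * G + v * (p : PowerSeries ℤ_[p]) := by
  classical
  have hd : ∀ F : PowerSeries ℤ_[p], (∀ i, (p : ℤ_[p]) ∣ coeff i F) → (p : PowerSeries ℤ_[p]) ∣ F := by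
    intro F hF
    choose c hc using hF
    refine ⟨mk c, ?_⟩
    ext i
    rw [hc, ← map_natCast (C (R := ℤ_[p])), coeff_C_mul, coeff_mk]
  have hex : ∃ i, ¬ (p : ℤ_[p]) ∣ coeff i G := by
    by_contra h
    push Not at h
    exact hG (hd G h)
  let k := Nat.find hex
  have hk := Nat.find_spec hex
  have hlt : ∀ i < k, (p : ℤ_[p]) ∣ coeff i G := fun i hi => by
    have := Nat.find_min hex hi
    push Not at this
    exact this
  have h1 := eq_X_pow_mul_shift_add_trunc k G
  set U : PowerSeries ℤ_[p] := mk fun i ↦ coeff (i + k) G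
  have hU : IsUnit U := by
    rw [isUnit_iff_constantCoeff]
    have : constantCoeff U = coeff k G := by simp [U, ← coeff_zero_eq_constantCoeff_apply]
    rw [this]
    by_contra hn
    apply hk
    have : coeff k G ∈ IsLocalRing.maximalIdeal ℤ_[p] := hn
    rwa [PadicInt.maximalIdeal_eq_span_p, Ideal.mem_span_singleton] at this
  obtain ⟨w, hw⟩ := hd (G.trunc k : PowerSeries ℤ_[p]) (fun i => by
    rw [Polynomial.coeff_coe, coeff_trunc]
    split_ifs with hi
    · exact hlt i hi
    · exact dvd_zero _)
  obtain ⟨V, hV⟩ := hU.exists_right_inv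
  refine ⟨k, V, - V * w, ?_⟩
  rw [hw] at h1
  linear_combination (-X ^ k) * hV - V * h1

theorem int_poly (p : ℕ) (hp : p.Prime) : ∃ r : Polynomial ℤ,
    (Polynomial.X + 1) ^ p = Polynomial.X ^ p + 1 + (p : Polynomial ℤ) * Polynomial.X * r ∧
      r.eval 0 = 1 := by
  obtain ⟨r, hr⟩ := exists_add_pow_prime_eq hp (Polynomial.X : Polynomial ℤ) 1
  refine ⟨r, by simpa using hr, ?_⟩
  have h2 := congrArg (fun q => (Polynomial.derivative q).eval 0) hr
  have h3 : p - 1 ≠ 0 := by have := hp.two_le; omega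
  have h4 : (p : ℤ) ≠ 0 := by exact_mod_cast hp.ne_zero
  simp [Polynomial.derivative_pow, h3] at h2
  exact mul_left_cancel₀ h4 (by rw [mul_one]; exact h2.symm)

theorem omega_succ (n : ℕ) : ∃ r : PowerSeries ℤ_[p], IsUnit r ∧
    omegaN p (n+1) = omegaN p n * (omegaN p n ^ (p - 1) + (p : PowerSeries ℤ_[p]) * r) := by
  obtain ⟨r, hr, hr0⟩ := int_poly p hpp.out
  refine ⟨Polynomial.aeval (omegaN p n) r, ?_, ?_⟩
  · rw [isUnit_iff_constantCoeff]
    have : constantCoeff (Polynomial.aeval (omegaN p n) r) = 1 := by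
      rw [Polynomial.aeval_def, Polynomial.hom_eval₂, const_omega, Polynomial.eval₂_at_zero,
        Polynomial.coeff_zero_eq_eval_zero, hr0, map_one]
    rw [this]; exact isUnit_one
  · have h := congrArg (Polynomial.aeval (omegaN p n)) hr
    simp only [map_pow, map_add, map_mul, Polynomial.aeval_X, map_one, map_natCast] at h
    have h1 : omegaN p (n+1) = (omegaN p n + 1) ^ p - 1 := by
      simp [omegaN, pow_succ, pow_mul]
    have h2 : omegaN p n ^ p = omegaN p n * omegaN p n ^ (p-1) := by
      rw [← pow_succ', Nat.sub_add_cancel hpp.out.one_le]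
    rw [h1, h, h2]; ring

end lam
end Iw

namespace Iw
section main
variable {p : ℕ} [hpp : Fact p.Prime]
variable {M : Type*} [AddCommGroup M] [Module (PowerSeries ℤ_[p]) M]

theorem qq_pow {f : PowerSeries ℤ_[p]} (h : qq f M ≠ 0) : ∃ k, qq f M = p ^ k := by
  rw [qq_eq] at *
  have : Finite (M ⧸ (Ideal.span {f} • (⊤ : Submodule (PowerSeries ℤ_[p]) M))) :=
    Nat.finite_of_card_ne_zero h
  exact card_pow _

theorem kk_pow {f : PowerSeries ℤ_[p]} (h : kk f M ≠ 0) : ∃ k, kk f M = p ^ k := by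
  rw [kk_eq] at *
  have : Finite (Submodule.torsionBy (PowerSeries ℤ_[p]) M f) :=
    Nat.finite_of_card_ne_zero h
  exact card_pow _

theorem quot_fin [Module.Finite (PowerSeries ℤ_[p]) M] (f : PowerSeries ℤ_[p]) (a b : ℕ)
    (ha : ∀ x : M, ∃ y : M, ((p : PowerSeries ℤ_[p]) ^ a) • x = f • y)
    (hb : ∀ x : M, ∃ y : M, ((X : PowerSeries ℤ_[p]) ^ b) • x = f • y) : qq f M ≠ 0 := by
  rw [qq_eq]
  have key : ∀ g : PowerSeries ℤ_[p], (∀ x : M, ∃ y : M, g • x = f • y) →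
      ∀ x : (M ⧸ (Ideal.span {f} • (⊤ : Submodule (PowerSeries ℤ_[p]) M))), g • x = 0 := by
    intro g hg x
    obtain ⟨x, rfl⟩ := Submodule.mkQ_surjective _ x
    obtain ⟨y, hy⟩ := hg x
    rw [← map_smul, hy, Submodule.mkQ_apply, Submodule.Quotient.mk_eq_zero]
    exact Submodule.smul_mem_smul (Ideal.mem_span_singleton_self _) trivial
  have := fin_of (M := (M ⧸ (Ideal.span {f} • (⊤ : Submodule (PowerSeries ℤ_[p]) M)))) a b
    (key _ ha) (key _ hb)
  exact Nat.card_pos.ne'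

theorem X_pow_omega (a n : ℕ) : ∃ u v : PowerSeries ℤ_[p],
    X ^ (p ^ n * a) = u * omegaN p n + v * (p : PowerSeries ℤ_[p]) ^ a := by
  obtain ⟨r, hr⟩ := omega_eq (p := p) n
  have : omegaN p n ∣ (X ^ p ^ n) ^ a - (-((p : PowerSeries ℤ_[p]) * r)) ^ a := by
    have h := sub_dvd_pow_sub_pow (X ^ p ^ n : PowerSeries ℤ_[p]) (-((p : PowerSeries ℤ_[p]) * r)) a
    rwa [sub_neg_eq_add, ← hr] at h
  obtain ⟨u, hu⟩ := this
  refine ⟨u, (-1) ^ a * r ^ a, ?_⟩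
  rw [pow_mul, sub_eq_iff_eq_add.1 hu, neg_pow, mul_pow]; ring

theorem kk_omega_ne [Module.Finite (PowerSeries ℤ_[p]) M] (a n : ℕ)
    (ha : ∀ x : M, ((p : PowerSeries ℤ_[p]) ^ a) • x = 0) : kk (omegaN p n) M ≠ 0 := by
  rw [kk_eq]
  obtain ⟨u, v, huv⟩ := X_pow_omega (p := p) a n
  have := fin_of (p := p) (M := Submodule.torsionBy (PowerSeries ℤ_[p]) M (omegaN p n)) a (p ^ n * a)
    (fun x => by ext; simpa using ha x) (fun x => by
      rw [huv, add_smul, mul_smul, mul_smul, Submodule.smul_torsionBy, smul_zero, zero_add]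
      ext
      simp [ha])
  exact Nat.card_pos.ne'

theorem caseP1 [Module.Finite (PowerSeries ℤ_[p]) M]
    (ha : ∀ x : M, (p : PowerSeries ℤ_[p]) • x = 0) :
    ∃ r : ℕ, ∀ n, qq (omegaN p n) M = p ^ (r * p ^ n) * kk (omegaN p n) M := by
  obtain ⟨b, hb⟩ := stab (M := M) (X : PowerSeries ℤ_[p])
  set A := Submodule.torsionBy (PowerSeries ℤ_[p]) M (X ^ b) with hA
  have hfin : Finite A := fin_of 1 b (fun x => by ext; simpa using ha x)
    (fun x => Submodule.smul_torsionBy _ _)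
  have hk : ∀ k, kk (X ^ k : PowerSeries ℤ_[p]) (M ⧸ A) = 1 ∧
      qq (X ^ k : PowerSeries ℤ_[p]) (M ⧸ A) = qq (X : PowerSeries ℤ_[p]) (M ⧸ A) ^ k := by
    intro k
    induction k with
    | zero =>
      refine ⟨kk_eq_one_iff.2 fun x hx => by simpa using hx, ?_⟩
      rw [pow_zero, pow_zero, qq, AddSubgroup.index_eq_one, AddMonoidHom.range_eq_top]
      intro x
      exact ⟨x, by simp⟩
    | succ k ih =>
      refine ⟨kk_eq_one_iff.2 fun x hx => ?_, ?_⟩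
      · rw [pow_succ, mul_smul] at hx
        exact kk_eq_one_iff.1 hb x (kk_eq_one_iff.1 ih.1 _ hx)
      · rw [pow_succ, qq_mul ih.1, ih.2, pow_succ]
  have hne : qq (X : PowerSeries ℤ_[p]) (M ⧸ A) ≠ 0 := by
    refine quot_fin _ 1 1 (fun x => ⟨0, ?_⟩) (fun x => ⟨x, by rw [pow_one]⟩)
    obtain ⟨x, rfl⟩ := Submodule.mkQ_surjective _ x
    rw [pow_one, ← map_smul, ha, map_zero, smul_zero]
  obtain ⟨r, hr⟩ := qq_pow hne
  refine ⟨r, fun n => ?_⟩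
  have hcong : ∀ x : M, omegaN p n • x = (X ^ (p ^ n) : PowerSeries ℤ_[p]) • x := by
    intro x
    obtain ⟨s, hs⟩ := omega_eq (p := p) n
    rw [hs, add_smul, mul_comm, mul_smul, ha, smul_zero, add_zero]
  rw [qq_congr hcong, kk_congr hcong]
  have h := ses (X ^ p ^ n : PowerSeries ℤ_[p]) A
  rw [(hk _).1, (hk _).2, hr, qq_finite (M := A), mul_one, ← pow_mul] at h
  have hpos : 0 < kk (X ^ p ^ n : PowerSeries ℤ_[p]) A := by
    rw [kk]; exact Nat.card_pos
  apply Nat.eq_of_mul_eq_mul_right hpos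
  rw [h]; ring

theorem caseP (a : ℕ) : ∀ (M : Type*) [AddCommGroup M] [Module (PowerSeries ℤ_[p]) M]
    [Module.Finite (PowerSeries ℤ_[p]) M],
    (∀ x : M, ((p : PowerSeries ℤ_[p]) ^ a) • x = 0) →
    ∃ r : ℕ, ∀ n, qq (omegaN p n) M = p ^ (r * p ^ n) * kk (omegaN p n) M := by
  induction a with
  | zero =>
    intro M _ _ _ ha
    exact caseP1 (fun x => by
      have := ha x
      rw [pow_zero, one_smul] at this
      rw [this, smul_zero])
  | succ a ih =>
    intro M _ _ _ ha
    let A : Submodule (PowerSeries ℤ_[p]) M :=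
      LinearMap.range (LinearMap.lsmul (PowerSeries ℤ_[p]) M (p : PowerSeries ℤ_[p]))
    have hA : ∀ x : A, ((p : PowerSeries ℤ_[p]) ^ a) • x = 0 := by
      rintro ⟨_, y, rfl⟩
      ext
      have := ha y
      rw [pow_succ, mul_smul] at this
      simpa using this
    have hB : ∀ x : M ⧸ A, (p : PowerSeries ℤ_[p]) • x = 0 := by
      intro x
      obtain ⟨x, rfl⟩ := Submodule.mkQ_surjective _ x
      rw [← map_smul, Submodule.mkQ_apply, Submodule.Quotient.mk_eq_zero]
      exact ⟨x, rfl⟩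
    obtain ⟨r1, h1⟩ := ih A hA
    obtain ⟨r2, h2⟩ := caseP1 hB
    refine ⟨r1 + r2, fun n => ?_⟩
    have h := ses (omegaN p n) A
    have n1 := kk_omega_ne (p := p) (M := A) a n hA
    have n2 := kk_omega_ne (p := p) (M := M ⧸ A) 1 n (by simpa using hB)
    rw [h1, h2] at h
    apply Nat.eq_of_mul_eq_mul_right (Nat.pos_of_ne_zero (mul_ne_zero n1 n2))
    rw [h]; ring

theorem caseQ (hp : Odd p) [Module.Finite (PowerSeries ℤ_[p]) M]
    (G : PowerSeries ℤ_[p]) (hG : ¬ (p : PowerSeries ℤ_[p]) ∣ G) (hGM : ∀ x : M, G • x = 0)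
    (hpt : kk (p : PowerSeries ℤ_[p]) M = 1) (hq : ∀ n, qq (omegaN p n) M ≠ 0) :
    (∀ n, kk (omegaN p n) M = 1) ∧
    ∃ l c N : ℕ, ∀ n, qq (omegaN p (N + n)) M = p ^ (l * n + c) := by
  obtain ⟨k, u, v, hk⟩ := exists_X_pow hG
  have hX : ∀ x : M, (X ^ k : PowerSeries ℤ_[p]) • x = (p : PowerSeries ℤ_[p]) • v • x := by
    intro x
    rw [hk, add_smul, mul_smul, hGM, smul_zero, zero_add, mul_comm, mul_smul]
  have hpq : qq (p : PowerSeries ℤ_[p]) M ≠ 0 :=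
    quot_fin _ 1 k (fun x => ⟨x, by rw [pow_one]⟩) (fun x => ⟨_, hX x⟩)
  have hker : ∀ n, kk (omegaN p n) M = 1 := by
    intro n
    have hle := ker_le_range (mm (p : PowerSeries ℤ_[p]) M) (mm (omegaN p n) M) (mm_inj hpt)
      (by ext x; exact smul_comm _ _ _) hpq (hq n)
    have hbot : Submodule.torsionBy (PowerSeries ℤ_[p]) M (omegaN p n) = ⊥ := by
      apply Submodule.eq_bot_of_le_smul_of_le_jacobson_bot
        (Ideal.span {(p : PowerSeries ℤ_[p])}) _ (IsNoetherian.noetherian _)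
      · intro x hx
        obtain ⟨y, hy⟩ := hle (show x ∈ (mm (omegaN p n) M).ker from hx)
        have hy' : (p : PowerSeries ℤ_[p]) • y = x := hy
        rw [← hy']
        refine Submodule.smul_mem_smul (Ideal.mem_span_singleton_self _) ?_
        rw [Submodule.mem_torsionBy_iff] at hx ⊢
        apply kk_eq_one_iff.1 hpt
        rw [smul_comm, hy', hx]
      · rw [jac, Ideal.span_le, Set.singleton_subset_iff]
        exact p_mem
    rw [kk_eq, hbot]
    simp
  refine ⟨hker, ?_⟩
  obtain ⟨l, hl⟩ := qq_pow hpq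
  obtain ⟨c, hc⟩ := qq_pow (hq k)
  refine ⟨l, c, k, fun n => ?_⟩
  induction n with
  | zero => simpa using hc
  | succ n ih =>
    obtain ⟨r, hr, hω⟩ := omega_succ (p := p) (k + n)
    rw [← add_assoc, hω, qq_mul (hker _), ih]
    have hωM : ∀ x : M, ∃ y : M, omegaN p (k + n) • x = (p : PowerSeries ℤ_[p]) • y := by
      intro x
      obtain ⟨s, hs⟩ := omega_eq (p := p) (k + n)
      have hle : k ≤ p ^ (k + n) :=
        (Nat.le_add_right k n).trans (Nat.lt_pow_self hpp.out.one_lt).le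
      obtain ⟨d, hd⟩ := Nat.exists_eq_add_of_le hle
      refine ⟨v • (X ^ d : PowerSeries ℤ_[p]) • x + s • x, ?_⟩
      rw [hs, hd, add_smul, pow_add, mul_smul, hX, mul_smul, smul_add]
    set w := omegaN p (k + n) with hw
    obtain ⟨e, he⟩ : ∃ e, p - 1 = e + 2 := by
      obtain ⟨j, hj⟩ := hp
      have := hpp.out.two_le
      exact ⟨p - 3, by omega⟩
    let ν := w ^ (p - 1) + (p : PowerSeries ℤ_[p]) * r
    have hrange : qq ν M = qq (p : PowerSeries ℤ_[p]) M := by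
      have : LinearMap.range (LinearMap.lsmul (PowerSeries ℤ_[p]) M ν) =
          LinearMap.range (LinearMap.lsmul (PowerSeries ℤ_[p]) M (p : PowerSeries ℤ_[p])) := by
        have hwp : ∀ x : M, ∃ y : M, w ^ (p - 1) • x = (p : PowerSeries ℤ_[p]) • w • y := by
          intro x
          obtain ⟨y, hy⟩ := hωM (w ^ e • x)
          refine ⟨y, ?_⟩
          rw [he, pow_succ', pow_succ', mul_smul, mul_smul, hy, smul_comm]
        apply le_antisymm
        · rintro _ ⟨x, rfl⟩
          obtain ⟨y, hy⟩ := hwp x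
          refine ⟨w • y + r • x, ?_⟩
          simp only [LinearMap.lsmul_apply, ν]
          rw [add_smul, hy, mul_smul, smul_add]
        · apply Submodule.le_of_le_smul_of_le_jacobson_bot (I := Ideal.span {w})
            (IsNoetherian.noetherian _)
          · rw [jac, Ideal.span_le, Set.singleton_subset_iff, SetLike.mem_coe, mem_max, const_omega]
            exact Ideal.zero_mem _
          · rintro _ ⟨x, rfl⟩
            obtain ⟨t, ht⟩ := hr.exists_right_inv
            obtain ⟨y, hy⟩ := hwp (t • x)
            have : (p : PowerSeries ℤ_[p]) • x = ν • t • x + w • ((p : PowerSeries ℤ_[p]) • (-y)) := by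
              simp only [ν]
              rw [add_smul, hy, smul_neg, smul_neg, smul_comm w, mul_smul, ← mul_smul r, ht, one_smul]
              abel
            rw [LinearMap.lsmul_apply, this]
            refine Submodule.add_mem_sup ⟨_, rfl⟩ ?_
            exact Submodule.smul_mem_smul (Ideal.mem_span_singleton_self _) ⟨_, rfl⟩
      have h2 := congrArg (fun S : Submodule (PowerSeries ℤ_[p]) M => S.toAddSubgroup.index) this
      exact h2
    rw [show w ^ (p - 1) + (p : PowerSeries ℤ_[p]) * r = ν from rfl, hrange, hl]
    ring

theorem kstab [IsNoetherian (PowerSeries ℤ_[p]) M] :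
    ∃ N, ∀ n ≥ N, kk (omegaN p n) M = kk (omegaN p N) M := by
  let F : ℕ →o Submodule (PowerSeries ℤ_[p]) M :=
    ⟨fun b => Submodule.torsionBy (PowerSeries ℤ_[p]) M (omegaN p b),
      monotone_nat_of_le_succ fun n => Submodule.torsionBy_le_torsionBy_of_dvd _ _ (by
        obtain ⟨r, -, hr⟩ := omega_succ (p := p) n
        exact ⟨_, hr⟩)⟩
  obtain ⟨b, hb⟩ := monotone_stabilizes_iff_noetherian.2 ‹_› F
  refine ⟨b, fun n hn => ?_⟩
  rw [kk_eq, kk_eq]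
  have : F n = F b := (hb n hn).symm
  change Nat.card (F n) = Nat.card (F b)
  rw [this]

theorem final (hp : Odd p) [Module.Finite (PowerSeries ℤ_[p]) M]
    (htors : Module.IsTorsion (PowerSeries ℤ_[p]) M)
    (hq : ∀ n, qq (omegaN p n) M ≠ 0) :
    ∃ (μ lam : ℕ) (ν : ℤ) (N : ℕ), ∀ n ≥ N,
      (qq (omegaN p n) M : ℝ) = (p : ℝ) ^ (((μ * p ^ n + lam * n : ℕ) : ℤ) + ν) := by
  obtain ⟨F, hF1, hF2⟩ := Submodule.annihilator_top_inter_nonZeroDivisors htors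
  have hF0 : F ≠ 0 := nonZeroDivisors.ne_zero hF2
  have hFM : ∀ x : M, F • x = 0 := fun x => (Submodule.mem_annihilator.1 hF1) x trivial
  obtain ⟨a, G, hG, rfl⟩ := WfDvdMonoid.max_power_factor' hF0
    (show ¬ IsUnit (p : PowerSeries ℤ_[p]) from p_mem)
  obtain ⟨b, hb⟩ := stab (M := M) (p : PowerSeries ℤ_[p])
  set A := Submodule.torsionBy (PowerSeries ℤ_[p]) M ((p : PowerSeries ℤ_[p]) ^ b) with hA
  have hpa : ∀ a, ∀ x : M ⧸ A, (p : PowerSeries ℤ_[p]) ^ a • x = 0 → x = 0 := by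
    intro a
    induction a with
    | zero => intro x hx; simpa using hx
    | succ a ih =>
      intro x hx
      rw [pow_succ, mul_smul] at hx
      exact kk_eq_one_iff.1 hb x (ih _ hx)
  have hGQ : ∀ x : M ⧸ A, G • x = 0 := by
    intro x
    apply hpa a
    obtain ⟨x, rfl⟩ := Submodule.mkQ_surjective _ x
    rw [← mul_smul, ← map_smul, hFM, map_zero]
  obtain ⟨hk1, l, c, N1, hQ⟩ := caseQ hp G hG hGQ hb (fun n => qq_quot_ne_zero A (hq n))
  have hPA : ∀ x : A, ((p : PowerSeries ℤ_[p]) ^ b) • x = 0 := fun x => Submodule.smul_torsionBy _ _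
  obtain ⟨r, hr⟩ := caseP b A hPA
  obtain ⟨N2, hN2⟩ := kstab (p := p) (M := M)
  have hmain : ∀ n, qq (omegaN p n) M = p ^ (r * p ^ n) * qq (omegaN p n) (M ⧸ A) * kk (omegaN p n) M := by
    intro n
    have h := ses (omegaN p n) A
    rw [hk1, hr] at h
    apply Nat.eq_of_mul_eq_mul_right (Nat.pos_of_ne_zero (kk_omega_ne (p := p) (M := A) b n hPA))
    rw [mul_one] at h
    rw [h]; ring
  have hkne : kk (omegaN p N2) M ≠ 0 := by
    intro h0
    apply hq N2
    rw [hmain, h0, mul_zero]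
  obtain ⟨d, hd⟩ := kk_pow hkne
  refine ⟨r, l, (c : ℤ) + d - l * N1, max N1 N2, fun n hn => ?_⟩
  obtain ⟨m, rfl⟩ := Nat.exists_eq_add_of_le ((le_max_left _ _).trans hn)
  rw [hmain, hQ, hN2 _ ((le_max_right _ _).trans hn), hd]
  push_cast
  rw [← pow_add, ← pow_add, ← zpow_natCast]
  congr 1
  push_cast
  ring

end main
end Iw

/-- For a finitely generated torsion `Λ = ℤ_p[[T]]`-module `M` with all
quotients `M/ω_n M` finite, there are `μ, λ ∈ ℕ`, `ν ∈ ℤ` and `N` such that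
`#(M/ω_n M) = p^{μ p^n + λ n + ν}` for all `n ≥ N`. -/
theorem statement2 (p : ℕ) [Fact p.Prime] (hp : Odd p)
    (M : Type*) [AddCommGroup M] [Module (PowerSeries ℤ_[p]) M]
    [Module.Finite (PowerSeries ℤ_[p]) M]
    (htors : Module.IsTorsion (PowerSeries ℤ_[p]) M)
    (hfin : ∀ n : ℕ,
      Finite (M ⧸ (Ideal.span {omegaN p n} • (⊤ : Submodule (PowerSeries ℤ_[p]) M)))) :
    ∃ (μ lam : ℕ) (ν : ℤ) (N : ℕ), ∀ n ≥ N,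
      (Nat.card
        (M ⧸ (Ideal.span {omegaN p n} • (⊤ : Submodule (PowerSeries ℤ_[p]) M))) : ℝ)
        = (p : ℝ) ^ (((μ * p ^ n + lam * n : ℕ) : ℤ) + ν) := by
  have h := Iw.final (M := M) hp htors (fun n => by
    rw [Iw.qq_eq]
    have := hfin n
    exact Nat.card_pos.ne')
  simp only [Iw.qq_eq] at h
  exact h
end

section
/- Let φ : M → M′ be a Λ-module homomorphism between finitely generated torsion Λ-modules whose kernel and cokernel are both finite. Then there exists N ∈ ℕ such that for all n ≥ N the ℤ_p-ranks of M/ω_nM and M′/ω_nM′ are equal, and there exists a constant C such that |log_p #((M/ω_nM)[p^∞]) − log_p #((M′/ω_nM′)[p^∞])| ≤ C for all n ≥ 0. -/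
open PowerSeries

/-- A finite module over a characteristic zero domain has rank zero. -/
theorem aux_torsion_of_finite {S A : Type*} [CommRing S] [IsDomain S] [CharZero S]
    [AddCommGroup A] [Module S A] [Finite A] : Module.IsTorsion S A := by
  intro x
  refine ⟨⟨(Nat.card A : S), ?_⟩, ?_⟩
  · rw [mem_nonZeroDivisors_iff_ne_zero]
    exact_mod_cast (Nat.card_pos (α := A)).ne'
  · change (Nat.card A : S) • x = 0
    rw [Nat.cast_smul_eq_nsmul, card_nsmul_eq_zero']

theorem aux_finrank {S A B : Type*} [CommRing S] [IsDomain S] [CharZero S]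
    [AddCommGroup A] [Module S A] [AddCommGroup B] [Module S B] (f : A →ₗ[S] B)
    (hk : Finite (LinearMap.ker f)) (hc : Finite (B ⧸ LinearMap.range f)) :
    Module.finrank S A = Module.finrank S B := by
  have h1 : Module.rank S (LinearMap.ker f) = 0 :=
    Module.rank_eq_zero_iff_isTorsion.2 aux_torsion_of_finite
  have h2 : Module.rank S (B ⧸ LinearMap.range f) = 0 :=
    Module.rank_eq_zero_iff_isTorsion.2 aux_torsion_of_finite
  have h3 := rank_quotient_add_rank_of_isDomain (LinearMap.ker f)
  have h4 := rank_quotient_add_rank_of_isDomain (LinearMap.range f)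
  rw [h1, add_zero] at h3
  rw [h2, zero_add] at h4
  have h5 := f.quotKerEquivRange.finrank_eq
  unfold Module.finrank at h5 ⊢
  rw [← h3, ← h4, h5]

theorem aux_card {X Y : Type*} (s : Set Y) (g : X → Y) [Finite X] (h : s ⊆ Set.range g) :
    Finite s ∧ Nat.card s ≤ Nat.card X := by
  have hf : (Set.range g).Finite := Set.finite_range g
  refine ⟨hf.subset h, ?_⟩
  calc Nat.card s ≤ Nat.card (Set.range g) := Nat.card_mono hf h
    _ ≤ Nat.card X := Finite.card_range_le g

theorem aux_torsA {S A B : Type*} [CommRing S] [IsDomain S]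
    [AddCommGroup A] [Module S A] [AddCommGroup B] [Module S B] (f : A →ₗ[S] B)
    (hk : Finite (LinearMap.ker f)) (hB : Finite (Submodule.torsion S B)) :
    Finite (Submodule.torsion S A) ∧ Nat.card (Submodule.torsion S A) ≤
      Nat.card (LinearMap.ker f) * Nat.card (Submodule.torsion S B) := by
  have hx : ∀ t : Submodule.torsion S B, ∃ a : A, (∃ a' : A, f a' = t) → f a = t := by
    intro t
    by_cases h : ∃ a' : A, f a' = t
    · exact ⟨h.choose, fun _ => h.choose_spec⟩
    · exact ⟨0, fun h' => (h h').elim⟩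
  choose g hg using hx
  rw [← Nat.card_prod]
  refine aux_card (Submodule.torsion S A : Set A)
    (fun q : LinearMap.ker f × Submodule.torsion S B => (q.1 : A) + g q.2) ?_
  intro a ha
  have hfa : f a ∈ Submodule.torsion S B := by
    obtain ⟨r, hr⟩ := (Submodule.mem_torsion_iff a).1 ha
    refine (Submodule.mem_torsion_iff _).2 ⟨r, ?_⟩
    change (r : S) • f a = 0
    change (r : S) • a = 0 at hr
    rw [← map_smul, hr, map_zero]
  have h := hg ⟨f a, hfa⟩ ⟨a, rfl⟩
  refine ⟨(⟨a - g ⟨f a, hfa⟩, ?_⟩, ⟨f a, hfa⟩), ?_⟩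
  · rw [LinearMap.mem_ker, map_sub, h, sub_self]
  · simp

theorem aux_torsB {S A B : Type*} [CommRing S] [IsDomain S] [CharZero S]
    [AddCommGroup A] [Module S A] [AddCommGroup B] [Module S B] (f : A →ₗ[S] B)
    (hk : Finite (LinearMap.ker f)) (hc : Finite (B ⧸ LinearMap.range f))
    (hA : Finite (Submodule.torsion S A)) :
    Finite (Submodule.torsion S B) ∧ Nat.card (Submodule.torsion S B) ≤
      Nat.card (B ⧸ LinearMap.range f) * Nat.card (Submodule.torsion S A) := by
  have hx : ∀ d : B ⧸ LinearMap.range f, ∃ b : B, b ∈ Submodule.torsion S B ∧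
      ((∃ b' ∈ Submodule.torsion S B, Submodule.Quotient.mk b' = d) →
        Submodule.Quotient.mk b = d) := by
    intro d
    by_cases h : ∃ b' ∈ Submodule.torsion S B,
      (Submodule.Quotient.mk b' : B ⧸ LinearMap.range f) = d
    · exact ⟨h.choose, h.choose_spec.1, fun _ => h.choose_spec.2⟩
    · exact ⟨0, zero_mem _, fun h' => (h h').elim⟩
  choose g hgt hg using hx
  rw [← Nat.card_prod]
  refine aux_card (Submodule.torsion S B : Set B)
    (fun q : (B ⧸ LinearMap.range f) × Submodule.torsion S A => g q.1 + f q.2) ?_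
  intro b hb
  have h := hg (Submodule.Quotient.mk b) ⟨b, hb, rfl⟩
  have h' := (Submodule.Quotient.eq _).1 h.symm
  obtain ⟨a, ha⟩ := h'
  have hm : f a ∈ Submodule.torsion S B := by
    rw [ha]; exact sub_mem hb (hgt _)
  have hat : a ∈ Submodule.torsion S A := by
    obtain ⟨r, hr⟩ := (Submodule.mem_torsion_iff _).1 hm
    change (r : S) • f a = 0 at hr
    rw [← map_smul] at hr
    obtain ⟨s, hs⟩ := aux_torsion_of_finite (S := S) (A := LinearMap.ker f)
      (x := ⟨(r : S) • a, hr⟩)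
    refine (Submodule.mem_torsion_iff _).2 ⟨s * r, ?_⟩
    have := congrArg Subtype.val hs
    change (s : S) • (r : S) • a = 0 at this
    change ((s : S) * (r : S)) • a = 0
    rw [mul_smul, this]
  exact ⟨(Submodule.Quotient.mk b, ⟨a, hat⟩), by simp [ha]⟩

theorem aux_log {p : ℕ} (hp : 1 < p) {a b k c K C : ℕ} (ha : 0 < a) (hb : 0 < b)
    (hab : a ≤ k * b) (hba : b ≤ c * a) (hk : k ≤ K) (hc : c ≤ C) :
    |Real.logb p a - Real.logb p b| ≤ Real.logb p K + Real.logb p C := by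
  have hp' : (1 : ℝ) < p := by exact_mod_cast hp
  have key : ∀ {a b k K : ℕ}, 0 < a → 0 < b → a ≤ k * b → k ≤ K →
      0 ≤ Real.logb p K ∧ Real.logb p a ≤ Real.logb p K + Real.logb p b := by
    intro a b k K ha hb hab hk
    have h1 : 0 < K := by
      rcases Nat.eq_zero_or_pos K with h | h
      · subst h
        obtain rfl : k = 0 := by omega
        omega
      · exact h
    refine ⟨Real.logb_nonneg hp' (by exact_mod_cast h1), ?_⟩
    rw [← Real.logb_mul (by positivity) (by positivity)]
    refine Real.logb_le_logb_of_le hp' (by positivity) ?_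
    exact_mod_cast hab.trans (Nat.mul_le_mul_right _ hk)
  obtain ⟨h1, h2⟩ := key ha hb hab hk
  obtain ⟨h3, h4⟩ := key hb ha hba hc
  rw [abs_le]
  constructor <;> linarith

theorem aux_abs {p : ℕ} (hp : 1 < p) {S A B : Type*} [CommRing S] [IsDomain S] [CharZero S]
    [AddCommGroup A] [Module S A] [AddCommGroup B] [Module S B] (f : A →ₗ[S] B)
    (hk : Finite (LinearMap.ker f)) (hc : Finite (B ⧸ LinearMap.range f)) {K C : ℕ}
    (hK : Nat.card (LinearMap.ker f) ≤ K) (hC : Nat.card (B ⧸ LinearMap.range f) ≤ C) :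
    |Real.logb p (Nat.card (Submodule.torsion S A)) -
      Real.logb p (Nat.card (Submodule.torsion S B))| ≤ Real.logb p K + Real.logb p C := by
  by_cases hA : Finite (Submodule.torsion S A)
  · obtain ⟨hB, h1⟩ := aux_torsB f hk hc hA
    obtain ⟨-, h2⟩ := aux_torsA f hk hB
    exact aux_log hp Nat.card_pos Nat.card_pos h2 h1 hK hC
  · have hB : ¬ Finite (Submodule.torsion S B) := fun hB => hA (aux_torsA f hk hB).1
    rw [not_finite_iff_infinite] at hA hB
    rw [Nat.card_eq_zero_of_infinite, Nat.card_eq_zero_of_infinite]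
    have h1 : 0 < K := Nat.card_pos.trans_le hK
    have h2 : 0 < C := Nat.card_pos.trans_le hC
    have hp' : (1 : ℝ) < p := by exact_mod_cast hp
    rw [sub_self, abs_zero]
    exact add_nonneg (Real.logb_nonneg hp' (by exact_mod_cast h1))
      (Real.logb_nonneg hp' (by exact_mod_cast h2))

theorem aux_map {S R M M' : Type*} [CommRing S] [CommRing R] [Algebra S R]
    [AddCommGroup M] [Module R M] [Module S M] [IsScalarTower S R M]
    [AddCommGroup M'] [Module R M'] [Module S M'] [IsScalarTower S R M']
    (φ : M →ₗ[R] M') (hker : Finite (LinearMap.ker φ))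
    (hcoker : Finite (M' ⧸ LinearMap.range φ)) (w : R) :
    ∃ f : (M ⧸ (Ideal.span {w} • (⊤ : Submodule R M))) →ₗ[S]
        (M' ⧸ (Ideal.span {w} • (⊤ : Submodule R M'))),
      (Finite (LinearMap.ker f) ∧ Nat.card (LinearMap.ker f) ≤
        Nat.card (LinearMap.ker φ) * Nat.card (M' ⧸ LinearMap.range φ)) ∧
      (Finite (_ ⧸ LinearMap.range f) ∧ Nat.card (_ ⧸ LinearMap.range f) ≤
        Nat.card (M' ⧸ LinearMap.range φ)) := by
  have hle : (Ideal.span {w} • (⊤ : Submodule R M)) ≤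
      (Ideal.span {w} • (⊤ : Submodule R M')).comap φ := by
    rw [← Submodule.map_le_iff_le_comap, Submodule.map_smul'']
    exact Submodule.smul_mono le_rfl le_top
  refine ⟨(Submodule.mapQ _ _ φ hle).restrictScalars S, ?_, ?_⟩
  · have hx : ∀ d : M' ⧸ LinearMap.range φ, ∃ m : M,
        (∃ m' : M, ∃ y : M', φ m' = w • y ∧ Submodule.Quotient.mk y = d) →
        ∃ y : M', φ m = w • y ∧ Submodule.Quotient.mk y = d := by
      intro d
      by_cases h : ∃ m' : M, ∃ y : M', φ m' = w • y ∧
        (Submodule.Quotient.mk y : M' ⧸ LinearMap.range φ) = d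
      · exact ⟨h.choose, fun _ => h.choose_spec⟩
      · exact ⟨0, fun h' => (h h').elim⟩
    choose g hg using hx
    rw [← Nat.card_prod]
    refine aux_card (SetLike.coe (LinearMap.ker _))
      (fun q : LinearMap.ker φ × (M' ⧸ LinearMap.range φ) =>
        Submodule.Quotient.mk ((q.1 : M) + g q.2)) ?_
    intro a ha
    obtain ⟨m, rfl⟩ := Submodule.Quotient.mk_surjective _ a
    have ha' : (Submodule.Quotient.mk (φ m) :
      M' ⧸ (Ideal.span {w} • (⊤ : Submodule R M'))) = 0 := ha
    rw [Submodule.Quotient.mk_eq_zero, Submodule.ideal_span_singleton_smul] at ha'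
    obtain ⟨y, -, hy⟩ := (Submodule.mem_smul_pointwise_iff_exists _ _ _).1 ha'
    obtain ⟨y', hy', hyy⟩ := hg (Submodule.Quotient.mk y) ⟨m, y, hy.symm, rfl⟩
    obtain ⟨z, hz⟩ := (Submodule.Quotient.eq _).1 hyy
    refine ⟨(⟨m - g (Submodule.Quotient.mk y) + w • z, ?_⟩, Submodule.Quotient.mk y), ?_⟩
    · rw [LinearMap.mem_ker, map_add, map_sub, map_smul, hz, hy', ← hy, smul_sub]
      abel
    · rw [Submodule.Quotient.eq, Submodule.ideal_span_singleton_smul]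
      refine (Submodule.mem_smul_pointwise_iff_exists _ _ _).2 ⟨z, trivial, ?_⟩
      simp only
      abel
  · set f := (Submodule.mapQ _ _ φ hle).restrictScalars S with hf
    have hs : Function.Surjective (fun d : M' ⧸ LinearMap.range φ =>
        (Submodule.Quotient.mk (Submodule.Quotient.mk d.out) : _ ⧸ LinearMap.range f)) := by
      intro x
      obtain ⟨x, rfl⟩ := Submodule.Quotient.mk_surjective _ x
      obtain ⟨y, rfl⟩ := Submodule.Quotient.mk_surjective _ x
      refine ⟨Submodule.Quotient.mk y, ?_⟩
      have h : (Submodule.Quotient.mk (Quotient.out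
        (Submodule.Quotient.mk y : M' ⧸ LinearMap.range φ)) : M' ⧸ LinearMap.range φ) =
          Submodule.Quotient.mk y := Quotient.out_eq _
      obtain ⟨z, hz⟩ := (Submodule.Quotient.eq _).1 h
      refine (Submodule.Quotient.eq _).2 ⟨Submodule.Quotient.mk z, ?_⟩
      rw [← Submodule.Quotient.mk_sub, ← hz]
      rfl
    exact ⟨Finite.of_surjective _ hs, Nat.card_le_card_of_surjective _ hs⟩

/-- If `φ : M → M'` is a `Λ`-homomorphism of finitely generated torsion
`Λ = ℤ_p[[T]]`-modules with finite kernel and cokernel (i.e. a pseudo-isomorphism), then the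
`ℤ_p`-ranks of `M/ω_n M` and `M'/ω_n M'` agree for `n` large, and the quantities
`log_p #((M/ω_n M)[p^∞])` and `log_p #((M'/ω_n M')[p^∞])` differ by a bounded amount. -/
theorem statement4 (p : ℕ) [Fact p.Prime] (hp : Odd p)
    (M M' : Type*) [AddCommGroup M] [Module (PowerSeries ℤ_[p]) M]
    [Module ℤ_[p] M] [IsScalarTower ℤ_[p] (PowerSeries ℤ_[p]) M]
    [Module.Finite (PowerSeries ℤ_[p]) M]
    [AddCommGroup M'] [Module (PowerSeries ℤ_[p]) M']
    [Module ℤ_[p] M'] [IsScalarTower ℤ_[p] (PowerSeries ℤ_[p]) M']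
    [Module.Finite (PowerSeries ℤ_[p]) M']
    (htors : Module.IsTorsion (PowerSeries ℤ_[p]) M)
    (htors' : Module.IsTorsion (PowerSeries ℤ_[p]) M')
    (φ : M →ₗ[PowerSeries ℤ_[p]] M')
    (hker : Finite (LinearMap.ker φ))
    (hcoker : Finite (M' ⧸ LinearMap.range φ)) :
    (∃ N : ℕ, ∀ n ≥ N,
      Module.finrank ℤ_[p]
        (M ⧸ (Ideal.span {omegaN p n} • (⊤ : Submodule (PowerSeries ℤ_[p]) M))) =
      Module.finrank ℤ_[p]
        (M' ⧸ (Ideal.span {omegaN p n} • (⊤ : Submodule (PowerSeries ℤ_[p]) M')))) ∧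
    (∃ C : ℝ, ∀ n : ℕ,
      |Real.logb p (Nat.card (Submodule.torsion ℤ_[p]
          (M ⧸ (Ideal.span {omegaN p n} • (⊤ : Submodule (PowerSeries ℤ_[p]) M))))) -
       Real.logb p (Nat.card (Submodule.torsion ℤ_[p]
          (M' ⧸ (Ideal.span {omegaN p n} • (⊤ : Submodule (PowerSeries ℤ_[p]) M')))))| ≤ C) := by
  choose f hf using fun n : ℕ => aux_map (S := ℤ_[p]) φ hker hcoker (omegaN p n)
  refine ⟨⟨0, fun n _ => aux_finrank (f n) (hf n).1.1 (hf n).2.1⟩, _, fun n =>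
    aux_abs (Fact.out : p.Prime).one_lt (f n) (hf n).1.1 (hf n).2.1 (hf n).1.2 (hf n).2.2⟩
end

section
/- Let M be a finitely generated torsion Λ-module. Then for every n ≥ 0, the ℤ_p-rank of the kernel of multiplication by ω_n on M (i.e., of M[ω_n] = {m ∈ M : ω_n·m = 0}) equals the ℤ_p-rank of the cokernel M/ω_nM. -/
open PowerSeries

theorem aux_finite_quot (p : ℕ) [Fact p.Prime] (g : PowerSeries ℤ_[p])
    (hg : ¬ (C (p : ℤ_[p])) ∣ g) :
    Module.Finite ℤ_[p] (PowerSeries ℤ_[p] ⧸ Ideal.span {g}) := by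
  have hg' : g.map (IsLocalRing.residue ℤ_[p]) ≠ 0 := by
    intro h
    apply hg
    have h1 : ∀ i, (p : ℤ_[p]) ∣ coeff i g := by
      intro i
      have := congrArg (coeff i) h
      rw [coeff_map, map_zero, IsLocalRing.residue_eq_zero_iff,
        PadicInt.maximalIdeal_eq_span_p, Ideal.mem_span_singleton] at this
      exact this
    choose c hc using h1
    refine ⟨PowerSeries.mk c, ?_⟩
    ext i
    rw [coeff_C_mul, coeff_mk, hc]
  obtain ⟨f, h, H⟩ := exists_isWeierstrassFactorization hg'
  have hm := H.isDistinguishedAt.monic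
  have : Module.Finite ℤ_[p] (Polynomial ℤ_[p] ⧸ Ideal.span {f}) := hm.finite_adjoinRoot
  exact Module.Finite.equiv H.algEquivQuotient.toLinearEquiv

theorem aux_factor (p : ℕ) [Fact p.Prime] (f : PowerSeries ℤ_[p]) (hf : f ≠ 0) :
    ∃ k g, f = C (p : ℤ_[p]) ^ k * g ∧ ¬ (C (p : ℤ_[p])) ∣ g := by
  have : FiniteMultiplicity (C (p : ℤ_[p])) f := by
    obtain ⟨m, hm⟩ : ∃ m, coeff m f ≠ 0 := by
      by_contra! h
      exact hf (by ext i; simpa using h i)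
    obtain ⟨n, hn⟩ := FiniteMultiplicity.of_prime_left (PadicInt.prime_p (p := p)) hm
    refine ⟨n, fun ⟨q, hq⟩ => hn ⟨coeff m q, ?_⟩⟩
    rw [hq, ← map_pow, coeff_C_mul]
  obtain ⟨c, h1, h2⟩ := this.exists_eq_pow_mul_and_not_dvd
  exact ⟨_, c, h1, h2⟩

section
variable (p : ℕ) [Fact p.Prime] (M : Type*) [AddCommGroup M] [Module (PowerSeries ℤ_[p]) M]
    [Module ℤ_[p] M] [IsScalarTower ℤ_[p] (PowerSeries ℤ_[p]) M]

theorem aux_rank_lt [Module.Finite (PowerSeries ℤ_[p]) M]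
    (htors : Module.IsTorsion (PowerSeries ℤ_[p]) M) :
    Module.rank ℤ_[p] M < Cardinal.aleph0 := by
  obtain ⟨f, hf, hf0⟩ := Submodule.annihilator_top_inter_nonZeroDivisors htors
  obtain ⟨k, g, rfl, hg⟩ := aux_factor p f (nonZeroDivisors.ne_zero hf0)
  have hfin := aux_finite_quot p g hg
  set N : Submodule (PowerSeries ℤ_[p]) M := Ideal.span {g} • ⊤ with hN
  have : IsScalarTower ℤ_[p] (PowerSeries ℤ_[p] ⧸ Ideal.span {g}) (M ⧸ N) := by
    refine ⟨fun a x y => ?_⟩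
    obtain ⟨x, rfl⟩ := Ideal.Quotient.mk_surjective x
    obtain ⟨y, rfl⟩ := Submodule.Quotient.mk_surjective _ y
    change Submodule.Quotient.mk ((a • x) • y) = Submodule.Quotient.mk (a • (x • y))
    rw [smul_assoc]
  have h1 : Module.Finite (PowerSeries ℤ_[p]) (M ⧸ N) := inferInstance
  have h2 : Module.Finite (PowerSeries ℤ_[p] ⧸ Ideal.span {g}) (M ⧸ N) :=
    Module.Finite.of_restrictScalars_finite (PowerSeries ℤ_[p]) _ _
  have h3 : Module.Finite ℤ_[p] (M ⧸ N) :=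
    Module.Finite.trans (PowerSeries ℤ_[p] ⧸ Ideal.span {g}) _
  rw [← Submodule.rank_quotient_add_rank (N.restrictScalars ℤ_[p])]
  refine Cardinal.add_lt_aleph0 ?_ ?_
  · rw [(Submodule.Quotient.restrictScalarsEquiv ℤ_[p] N).rank_eq]
    exact Module.rank_lt_aleph0 _ _
  · have : Module.rank ℤ_[p] (N.restrictScalars ℤ_[p]) = 0 := by
      rw [rank_eq_zero_iff]
      rintro ⟨x, hx⟩
      refine ⟨(p : ℤ_[p]) ^ k, pow_ne_zero _ PadicInt.prime_p.ne_zero, ?_⟩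
      rw [Submodule.restrictScalars_mem, hN, Submodule.ideal_span_singleton_smul] at hx
      obtain ⟨y, -, rfl⟩ := hx
      ext
      have := (Submodule.mem_annihilator.mp hf) y trivial
      rw [mul_smul, ← map_pow] at this
      change (p : ℤ_[p]) ^ k • g • y = 0
      rw [← this, ← algebraMap_smul (PowerSeries ℤ_[p]) ((p : ℤ_[p]) ^ k) (g • y)]
      rfl
    rw [this]
    exact Cardinal.aleph0_pos

end

/-- For a finitely generated torsion `Λ = ℤ_p[[T]]`-module `M` and every
`n ≥ 0`, the `ℤ_p`-rank of `M[ω_n] = ker(ω_n : M → M)` equals the `ℤ_p`-rank of the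
cokernel `M/ω_n M`. -/
theorem statement5 (p : ℕ) [Fact p.Prime] (hp : Odd p)
    (M : Type*) [AddCommGroup M] [Module (PowerSeries ℤ_[p]) M]
    [Module ℤ_[p] M] [IsScalarTower ℤ_[p] (PowerSeries ℤ_[p]) M]
    [Module.Finite (PowerSeries ℤ_[p]) M]
    (htors : Module.IsTorsion (PowerSeries ℤ_[p]) M) :
    ∀ n : ℕ,
      Module.finrank ℤ_[p] (Submodule.torsionBy (PowerSeries ℤ_[p]) M (omegaN p n)) =
      Module.finrank ℤ_[p]
        (M ⧸ (Ideal.span {omegaN p n} • (⊤ : Submodule (PowerSeries ℤ_[p]) M))) := by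
  intro n
  have hlt := aux_rank_lt p M htors
  generalize omegaN p n = w
  let φ : M →ₗ[ℤ_[p]] M := (LinearMap.lsmul (PowerSeries ℤ_[p]) M w).restrictScalars ℤ_[p]
  have hr : LinearMap.range φ =
      (Ideal.span {w} • (⊤ : Submodule (PowerSeries ℤ_[p]) M)).restrictScalars ℤ_[p] := by
    ext x
    rw [Submodule.restrictScalars_mem, Submodule.ideal_span_singleton_smul]
    constructor
    · rintro ⟨y, rfl⟩
      exact ⟨y, trivial, rfl⟩
    · rintro ⟨y, -, rfl⟩
      exact ⟨y, rfl⟩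
  have e1 := LinearMap.rank_range_add_rank_ker φ
  have e2 := Submodule.rank_quotient_add_rank (LinearMap.range φ)
  have hR : Module.rank ℤ_[p] (LinearMap.range φ) < Cardinal.aleph0 :=
    (Submodule.rank_le _).trans_lt hlt
  rw [← e1, add_comm] at e2
  have e3 := Cardinal.eq_of_add_eq_add_left e2 hR
  rw [hr, (Submodule.Quotient.restrictScalarsEquiv ℤ_[p] _).rank_eq] at e3
  have e4 : Module.finrank ℤ_[p] (LinearMap.ker φ) =
    Module.finrank ℤ_[p] (Submodule.torsionBy (PowerSeries ℤ_[p]) M w) := rfl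
  rw [← e4, Module.finrank, Module.finrank, e3]
end

section
/- Let R be a commutative ring, x ∈ R, and C a cochain complex of R-modules indexed by ℤ. Let C_x denote the mapping cone of the chain map x·id_C : C → C given by multiplication by x. Then for each i ∈ ℤ there is a short exact sequence of R-modules 0 → H^i(C)/x·H^i(C) → H^i(C_x) → H^{i+1}(C)[x] → 0, where H^{i+1}(C)[x] = {m ∈ H^{i+1}(C) : x·m = 0} is the x-torsion submodule. -/
open CategoryTheory Pretriangulated

set_option synthInstance.maxHeartbeats 1000000
set_option maxHeartbeats 1000000

theorem exact_transfer_aux {A : Type*} [Category* A] [Abelian A] {X₁ X₂ X₃ Y₁ Y₂ Y₃ : A}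
    (e₁ : X₁ ≅ Y₁) (e₂ : X₂ ≅ Y₂) (e₃ : X₃ ≅ Y₃) {f : X₁ ⟶ X₂} {g : X₂ ⟶ X₃}
    {f' : Y₁ ⟶ Y₂} {g' : Y₂ ⟶ Y₃} (z : f ≫ g = 0) (hx : (ShortComplex.mk f g z).Exact)
    (h₁ : e₁.hom ≫ f' = f ≫ e₂.hom) (h₂ : e₂.hom ≫ g' = g ≫ e₃.hom) :
    ∃ w : f' ≫ g' = 0, (ShortComplex.mk f' g' w).Exact := by
  have w : f' ≫ g' = 0 := by
    rw [← cancel_epi e₁.hom, reassoc_of% h₁, h₂, reassoc_of% z]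
    simp
  exact ⟨w, ShortComplex.exact_of_iso (ShortComplex.isoMk e₁ e₂ e₃ h₁ h₂) hx⟩

theorem cone_les_aux {A : Type*} [Category* A] [Abelian A] {K L : CochainComplex A ℤ}
    (φ : K ⟶ L) (i : ℤ) :
    ∃ (δ : (CochainComplex.mappingCone φ).homology i ⟶ K.homology (i+1))
      (w₁ : HomologicalComplex.homologyMap φ i ≫
        HomologicalComplex.homologyMap (CochainComplex.mappingCone.inr φ) i = 0)
      (w₂ : HomologicalComplex.homologyMap (CochainComplex.mappingCone.inr φ) i ≫ δ = 0)
      (w₃ : δ ≫ HomologicalComplex.homologyMap φ (i+1) = 0),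
      (ShortComplex.mk _ _ w₁).Exact ∧ (ShortComplex.mk _ _ w₂).Exact ∧
        (ShortComplex.mk _ _ w₃).Exact := by
  let F := HomotopyCategory.homologyFunctor A (ComplexShape.up ℤ) 0
  let T := CochainComplex.mappingCone.triangleh φ
  have hT : T ∈ distTriang _ :=
    HomotopyCategory.mappingCone_triangleh_distinguished φ
  let e (n : ℤ) (X : CochainComplex A ℤ) :
      (HomotopyCategory.homologyFunctor A (ComplexShape.up ℤ) n).obj
        ((HomotopyCategory.quotient _ _).obj X) ≅ X.homology n :=
    (HomotopyCategory.homologyFunctorFactors A (ComplexShape.up ℤ) n).app X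
  let d : (HomotopyCategory.homologyFunctor A (ComplexShape.up ℤ) i).obj
      ((HomotopyCategory.quotient _ _).obj (CochainComplex.mappingCone φ)) ⟶
      (HomotopyCategory.homologyFunctor A (ComplexShape.up ℤ) (i+1)).obj
      ((HomotopyCategory.quotient _ _).obj K) := F.homologySequenceδ T i (i+1) rfl
  have nat : ∀ {X Y : CochainComplex A ℤ} (f : X ⟶ Y) (n : ℤ),
    (e n X).hom ≫ HomologicalComplex.homologyMap f n =
      (HomotopyCategory.homologyFunctor A (ComplexShape.up ℤ) n).map
        ((HomotopyCategory.quotient _ _).map f) ≫ (e n Y).hom :=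
    fun f n =>
      ((HomotopyCategory.homologyFunctorFactors A (ComplexShape.up ℤ) n).hom.naturality f).symm
  let δ : (CochainComplex.mappingCone φ).homology i ⟶ K.homology (i+1) :=
    (e i _).inv ≫ d ≫ (e (i+1) K).hom
  have hδ : (e i _).hom ≫ δ = d ≫ (e (i+1) K).hom :=
    (e i _).hom_inv_id_assoc _
  have z₁ : (HomotopyCategory.homologyFunctor A (ComplexShape.up ℤ) i).map
        ((HomotopyCategory.quotient _ _).map φ) ≫
        (HomotopyCategory.homologyFunctor A (ComplexShape.up ℤ) i).map
        ((HomotopyCategory.quotient _ _).map (CochainComplex.mappingCone.inr φ)) = 0 :=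
    F.homologySequence_comp T hT i
  have z₂ : (HomotopyCategory.homologyFunctor A (ComplexShape.up ℤ) i).map
        ((HomotopyCategory.quotient _ _).map (CochainComplex.mappingCone.inr φ)) ≫ d = 0 :=
    F.comp_homologySequenceδ T hT i (i+1) rfl
  have z₃ : d ≫ (HomotopyCategory.homologyFunctor A (ComplexShape.up ℤ) (i+1)).map
        ((HomotopyCategory.quotient _ _).map φ) = 0 :=
    F.homologySequenceδ_comp T hT i (i+1) rfl
  have x₁ : (ShortComplex.mk _ _ z₁).Exact := F.homologySequence_exact₂ T hT i
  have x₂ : (ShortComplex.mk _ _ z₂).Exact := F.homologySequence_exact₃ T hT i (i+1) rfl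
  have x₃ : (ShortComplex.mk _ _ z₃).Exact := F.homologySequence_exact₁ T hT i (i+1) rfl
  obtain ⟨w₁, y₁⟩ := exact_transfer_aux (e i K) (e i L) (e i _) z₁ x₁ (nat _ _) (nat _ _)
  obtain ⟨w₂, y₂⟩ := exact_transfer_aux (e i L) (e i _) (e (i+1) K) z₂ x₂ (nat _ _) hδ
  obtain ⟨w₃, y₃⟩ := exact_transfer_aux (e i _) (e (i+1) K) (e (i+1) L) z₃ x₃ hδ (nat _ _)
  exact ⟨δ, w₁, w₂, w₃, y₁, y₂, y₃⟩

theorem homologyMap_smul_aux {R A : Type*} [CommRing R] [Category* A] [Abelian A] [Linear R A]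
    {K L : CochainComplex A ℤ} (φ : K ⟶ L) (x : R) (n : ℤ) :
    HomologicalComplex.homologyMap (x • φ) n = x • HomologicalComplex.homologyMap φ n := by
  have : (HomologicalComplex.shortComplexFunctor A (ComplexShape.up ℤ) n).map (x • φ) =
    x • (HomologicalComplex.shortComplexFunctor A (ComplexShape.up ℤ) n).map φ := rfl
  unfold HomologicalComplex.homologyMap
  rw [this]
  exact ShortComplex.homologyMap_smul _ _

theorem module_aux {R M N P : Type*} [CommRing R] [AddCommGroup M] [AddCommGroup N]
    [AddCommGroup P] [Module R M] [Module R N] [Module R P] (a : M →ₗ[R] M) (b : M →ₗ[R] N)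
    (c : N →ₗ[R] P) (d : P →ₗ[R] P) (h₁ : Function.Exact a b) (h₂ : Function.Exact b c)
    (h₃ : Function.Exact c d) :
    ∃ (f : (M ⧸ LinearMap.range a) →ₗ[R] N) (g : N →ₗ[R] LinearMap.ker d),
      Function.Injective f ∧ Function.Surjective g ∧ LinearMap.range f = LinearMap.ker g := by
  rw [LinearMap.exact_iff] at h₁ h₂ h₃
  refine ⟨(LinearMap.range a).liftQ b h₁.ge,
    c.codRestrict _ (fun n => h₃.ge ⟨n, rfl⟩), ?_, ?_, ?_⟩
  · rw [← LinearMap.ker_eq_bot]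
    exact Submodule.ker_liftQ_eq_bot _ _ _ h₁.le
  · rintro ⟨p, hp⟩
    obtain ⟨n, rfl⟩ := h₃.le hp
    exact ⟨n, rfl⟩
  · rw [Submodule.range_liftQ, LinearMap.ker_codRestrict, h₂]

/-- Let `R` be a commutative ring, `x ∈ R`, and `C` a cochain complex of
`R`-modules indexed by `ℤ`.  Let `C_x` be the mapping cone of `x · id_C : C → C`.  Then for
each `i ∈ ℤ` there is a short exact sequence of `R`-modules
`0 → H^i(C)/x H^i(C) → H^i(C_x) → H^{i+1}(C)[x] → 0`. -/
theorem statement10 (R : Type) [CommRing R] (C : CochainComplex (ModuleCat R) ℤ) (x : R)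
    (i : ℤ) :
    ∃ (f : ((C.homology i) ⧸ LinearMap.range
            (x • (LinearMap.id : C.homology i →ₗ[R] C.homology i))) →ₗ[R]
          (CochainComplex.mappingCone (x • (𝟙 C))).homology i)
      (g : (CochainComplex.mappingCone (x • (𝟙 C))).homology i →ₗ[R]
          (LinearMap.ker (x • (LinearMap.id : C.homology (i+1) →ₗ[R] C.homology (i+1))))),
      Function.Injective f ∧ Function.Surjective g ∧ LinearMap.range f = LinearMap.ker g := by
  obtain ⟨δ, w₁, w₂, w₃, h₁, h₂, h₃⟩ := cone_les_aux (x • (𝟙 C)) i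
  have key : ∀ n, (HomologicalComplex.homologyMap (x • (𝟙 C)) n).hom =
      x • (LinearMap.id : C.homology n →ₗ[R] C.homology n) := by
    intro n
    have : HomologicalComplex.homologyMap (x • (𝟙 C)) n = x • 𝟙 (C.homology n) := by
      rw [homologyMap_smul_aux, HomologicalComplex.homologyMap_id]
    rw [this]
    rfl
  rw [ShortComplex.ShortExact.moduleCat_exact_iff_function_exact] at h₁ h₂ h₃
  rw [← key i, ← key (i+1)]
  exact module_aux _ _ _ _ h₁ h₂ h₃
end
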